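/- arXiv:2311.11788 — 2 statements merged into one kernel-verified Lean document; each statement's English description precedes it below -/
import Mathlib

section
/- Let Γ₁, Γ₂ ⊆ ℕ^r be affine semigroups whose join Γ = Γ₁ ⊔ Γ₂ is defined (i.e., they are minimally generated by disjoint sets 𝒢₁, 𝒢₂ with extremal rays E_{Γ₁}, E_{Γ₂}, and E_{Γ₁} ∪ E_{Γ₂} is linearly independent over ℚ). Then Γ has a strongly indispensable minimal free resolution (SIFR) if and only if both Γ₁ and Γ₂ have SIFRs. -/
/-!
Write `Γ₁`, `Γ₂` for the two semigroups and `Γ` for their join. Linear independence of the extremal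
rays makes the sum of `Γ₁` and `Γ₂` direct, which has two consequences.

* `K[Γ] = K[Γ₁] ⊗ K[Γ₂]`, so by Künneth the tensor product of minimal graded resolutions of `K[Γ₁]`
  and `K[Γ₂]` is one of `K[Γ]`, with Betti degrees the sums `b₁ + b₂`. A comparison
  `b₁ + b₂ ≤_Γ b₁' + b₂'` splits into `b₁ ≤ b₁'` and `b₂ ≤ b₂'`. In a strongly indispensable
  resolution, `b ≤ b'` forces the homological degree of `b` to be at most that of `b'`: otherwise,
  descending from `b` along nonzero entries of the differential, one meets a generator in the same
  homological degree as `b'` and of degree strictly below it. Hence if `b₁ + b₂` and `b₁' + b₂'`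
  lie in the same homological degree, then so do `bᵢ` and `bᵢ'`, and strong indispensability of the
  factors gives `bᵢ = bᵢ'`.
* `Γ₁` and `Γ₂` are faces of `Γ`. The generators whose degree lies in a face form a subcomplex, and
  after setting the variables outside the face to zero they also form a quotient complex; so they
  resolve the semigroup ring of the face, and indispensability passes to them.
-/

open MvPolynomial

noncomputable section

set_option synthInstance.maxHeartbeats 1000000
set_option maxHeartbeats 1000000

/-- The affine semigroup of `ℕ^d` generated by `a₁,…,a_n`. -/
def affSemigroup {n d : ℕ} (a : Fin n → Fin d → ℕ) : AddSubmonoid (Fin d → ℕ) :=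
  AddSubmonoid.closure (Set.range a)

/-- `v` lies in the rational polyhedral cone generated by `a₁,…,a_n`. -/
def inCone {n d : ℕ} (a : Fin n → Fin d → ℕ) (v : Fin d → ℕ) : Prop :=
  ∃ c : Fin n → ℚ, (∀ i, 0 ≤ c i) ∧ ∀ j, (v j : ℚ) = ∑ i, c i * (a i j : ℚ)

/-- `ℋ(Γ) = (Cone(Γ) \ Γ) ∩ ℕ^d`, the set of holes of the affine semigroup. -/
def holes {n d : ℕ} (a : Fin n → Fin d → ℕ) : Set (Fin d → ℕ) :=
  {v | inCone a v ∧ v ∉ affSemigroup a}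

/-- The pseudo-Frobenius elements of the affine semigroup generated by `a`. -/
def pseudoFrobenius {n d : ℕ} (a : Fin n → Fin d → ℕ) : Set (Fin d → ℕ) :=
  {f | f ∈ holes a ∧ ∀ γ ∈ affSemigroup a, γ ≠ 0 → f + γ ∈ affSemigroup a}

/-- The toric (defining) ideal of the semigroup ring `K[Γ]`: the kernel of
`K[x₁,…,x_n] → K[t₁,…,t_d]`, `x_i ↦ t^{a_i}`. -/
def toricIdeal (K : Type*) [Field K] {n d : ℕ} (a : Fin n → Fin d → ℕ) :
    Ideal (MvPolynomial (Fin n) K) :=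
  RingHom.ker (MvPolynomial.aeval
      (fun i => MvPolynomial.monomial (Finsupp.equivFunOnFinite.symm (a i)) (1 : K)) :
    MvPolynomial (Fin n) K →ₐ[K] MvPolynomial (Fin d) K)

/-- The `Γ`-degree of an exponent vector: `e ↦ Σ eᵢ • aᵢ ∈ ℕ^d`. -/
def gammaDeg {n d : ℕ} (a : Fin n → Fin d → ℕ) (e : Fin n →₀ ℕ) : Fin d → ℕ :=
  ∑ i, e i • a i

/-- A (finite) minimal `Γ`-graded free resolution of the semigroup ring
`K[Γ] = K[x₁,…,x_n]/I_Γ` over the polynomial ring `R = K[x₁,…,x_n]`: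
`⋯ → R^{β₂} → R^{β₁} → R^{β₀} = R → K[Γ] → 0`,
where the `i`-th free module `R^{βᵢ}` has generators of `Γ`-degrees `deg i j`, the
differentials are given by matrices `mat i` whose entries are `Γ`-homogeneous of the
appropriate degrees and lie in the graded maximal ideal (minimality), and the complex
is exact. -/
structure MinFreeRes (K : Type*) [Field K] {n d : ℕ} (a : Fin n → Fin d → ℕ) where
  /-- the Betti numbers -/
  β : ℕ → ℕ
  β0 : β 0 = 1
  /-- the resolution has finite length -/
  bdd : ∃ N, ∀ i, N ≤ i → β i = 0
  /-- the `Γ`-degrees of the generators (the `i`-Betti `Γ`-degrees) -/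
  deg : (i : ℕ) → Fin (β i) → (Fin d → ℕ)
  deg0 : ∀ j, deg 0 j = 0
  /-- the matrix of the differential `R^{β_{i+1}} → R^{βᵢ}`;
  `mat i j j'` is the entry with source generator `j` and target generator `j'` -/
  mat : (i : ℕ) → Fin (β (i + 1)) → Fin (β i) → MvPolynomial (Fin n) K
  /-- the differentials are `Γ`-graded -/
  homog : ∀ i j j', ∀ e ∈ (mat i j j').support,
    deg (i + 1) j = gammaDeg a e + deg i j'
  /-- minimality: all entries lie in the maximal ideal `(x₁,…,x_n)` -/
  minimal : ∀ i j j', MvPolynomial.coeff 0 (mat i j j') = 0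
  /-- exactness at homological degree `0`: the kernel of the augmentation
  `R^{β₀} → K[Γ] = R/I_Γ` is the image of the first differential -/
  exact_zero :
    LinearMap.ker ((toricIdeal K a).mkQ ∘ₗ
        (LinearMap.lsum (MvPolynomial (Fin n) K)
            (fun _ : Fin (β 0) => MvPolynomial (Fin n) K) ℕ)
          fun _ => LinearMap.id) =
      LinearMap.range (Matrix.mulVecLin (Matrix.of fun j' j => mat 0 j j'))
  /-- exactness at all higher homological degrees -/
  exact_succ : ∀ i,
    LinearMap.ker (Matrix.mulVecLin (Matrix.of fun j' j => mat i j j')) =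
      LinearMap.range (Matrix.mulVecLin (Matrix.of fun j' j => mat (i + 1) j j'))

/-- The length (projective dimension of `K[Γ]`) of a minimal free resolution. -/
def MinFreeRes.pd {K : Type*} [Field K] {n d : ℕ} {a : Fin n → Fin d → ℕ}
    (F : MinFreeRes K a) : ℕ :=
  sSup {i | F.β i ≠ 0}

/-- The multiset `ℬᵢ` of `i`-Betti `Γ`-degrees of a minimal free resolution. -/
def MinFreeRes.Betti {K : Type*} [Field K] {n d : ℕ} {a : Fin n → Fin d → ℕ}
    (F : MinFreeRes K a) (i : ℕ) : Multiset (Fin d → ℕ) :=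
  Multiset.map (F.deg i) Finset.univ.val

/-- `Γ` is a maximal projective dimension (MPD) semigroup:
`pd_R K[Γ] = n − 1`, i.e. some (hence any) minimal graded free resolution of `K[Γ]`
has length `n − 1`. -/
def IsMPD (K : Type*) [Field K] {n d : ℕ} (a : Fin n → Fin d → ℕ) : Prop :=
  ∃ F : MinFreeRes K a, F.pd = n - 1

/-- The strong indispensability condition for a minimal graded free resolution:
`±(b − b′) ∉ Γ` for all `i`-Betti `Γ`-degrees `b, b′ ∈ ℬᵢ(Γ)`, `1 ≤ i ≤ pd(Γ)`. -/
def SIFRCond {K : Type*} [Field K] {n d : ℕ} {a : Fin n → Fin d → ℕ}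
    (F : MinFreeRes K a) : Prop :=
  ∀ i, 1 ≤ i → i ≤ F.pd → ∀ j j' : Fin (F.β i), j ≠ j' →
    ∀ γ ∈ affSemigroup a, F.deg i j ≠ γ + F.deg i j'

/-- `Γ` has a strongly indispensable minimal free resolution (SIFR). -/
def HasSIFR (K : Type*) [Field K] {n d : ℕ} (a : Fin n → Fin d → ℕ) : Prop :=
  ∃ F : MinFreeRes K a, SIFRCond F

section Degrees

variable {n d : ℕ} {a : Fin n → Fin d → ℕ}

theorem gammaDeg_eq_linearCombination (a : Fin n → Fin d → ℕ) (e : Fin n →₀ ℕ) :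
    gammaDeg a e = Finsupp.linearCombination ℕ a e :=
  (Finsupp.sum_fintype e (fun i c => c • a i) fun i => zero_smul ℕ (a i)).symm

theorem gammaDeg_add (a : Fin n → Fin d → ℕ) (e f : Fin n →₀ ℕ) :
    gammaDeg a (e + f) = gammaDeg a e + gammaDeg a f := by
  simp only [gammaDeg_eq_linearCombination, map_add]

theorem gammaDeg_mapDomain {m : ℕ} (a : Fin n → Fin d → ℕ) (f : Fin m → Fin n)
    (e : Fin m →₀ ℕ) : gammaDeg a (e.mapDomain f) = gammaDeg (a ∘ f) e := by
  simp only [gammaDeg_eq_linearCombination, Finsupp.linearCombination_mapDomain]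

theorem mem_affSemigroup_iff {v : Fin d → ℕ} :
    v ∈ affSemigroup a ↔ ∃ e, gammaDeg a e = v := by
  simp only [gammaDeg_eq_linearCombination, affSemigroup, AddSubmonoid.mem_closure_range_iff,
    Finsupp.linearCombination_apply, eq_comm]

theorem gammaDeg_mem_affSemigroup (a : Fin n → Fin d → ℕ) (e : Fin n →₀ ℕ) :
    gammaDeg a e ∈ affSemigroup a :=
  mem_affSemigroup_iff.2 ⟨e, rfl⟩

theorem gammaDeg_eq_zero_iff (ha : ∀ i, a i ≠ 0) {e : Fin n →₀ ℕ} :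
    gammaDeg a e = 0 ↔ e = 0 := by
  simp only [gammaDeg, Finset.sum_eq_zero_iff, Finset.mem_univ, true_implies, smul_eq_zero, ha,
    or_false, Finsupp.ext_iff, Finsupp.zero_apply]

/-- The semigroup order `u ≤_Γ v`, that is `v - u ∈ Γ`, written without subtraction. -/
def GammaLE (a : Fin n → Fin d → ℕ) (u v : Fin d → ℕ) : Prop :=
  ∃ γ ∈ affSemigroup a, v = γ + u

namespace GammaLE

variable {u v w : Fin d → ℕ}

theorem trans (huv : GammaLE a u v) (hvw : GammaLE a v w) : GammaLE a u w := by
  obtain ⟨γ, hγ, rfl⟩ := huv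
  obtain ⟨δ, hδ, rfl⟩ := hvw
  exact ⟨δ + γ, add_mem hδ hγ, (add_assoc δ γ u).symm⟩

theorem le (huv : GammaLE a u v) : u ≤ v := by
  obtain ⟨γ, -, rfl⟩ := huv
  exact le_add_self

end GammaLE

end Degrees

section Direct

/-- Two submonoids are in direct position if each element of their sum decomposes uniquely. -/
def IsDirect {M : Type*} [AddCommMonoid M] (S T : AddSubmonoid M) : Prop :=
  ∀ ⦃u u' w w' : M⦄, u ∈ S → u' ∈ S → w ∈ T → w' ∈ T → u + w = u' + w' → u = u' ∧ w = w'

theorem isDirect_of_disjoint {R M N : Type*} [Ring R] [AddCommMonoid M] [AddCommGroup N]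
    [Module R N] {S T : AddSubmonoid M} {φ : M →+ N} (hφ : Function.Injective φ)
    {P Q : Submodule R N} (hPQ : Disjoint P Q) (hS : ∀ u ∈ S, φ u ∈ P) (hT : ∀ w ∈ T, φ w ∈ Q) :
    IsDirect S T := by
  intro u u' w w' hu hu' hw hw' huw
  have hsub : φ u - φ u' = φ w' - φ w := by
    rw [sub_eq_sub_iff_add_eq_add, ← map_add, huw, map_add, add_comm]
  have hzero : φ u - φ u' = 0 := Submodule.disjoint_def.1 hPQ _
    (sub_mem (hS u hu) (hS u' hu')) (hsub ▸ sub_mem (hT w' hw') (hT w hw))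
  exact ⟨hφ (sub_eq_zero.1 hzero), hφ (sub_eq_zero.1 (hsub.symm.trans hzero)).symm⟩

theorem natCast_comp_mem_span {ι κ : Type*} [Fintype ι] {e : ι → κ → ℚ} {u : κ → ℕ}
    (hu : ∃ c : ι → ℚ, ∀ j, (u j : ℚ) = ∑ t, c t * e t j) :
    (Nat.cast ∘ u : κ → ℚ) ∈ Submodule.span ℚ (Set.range e) := by
  obtain ⟨c, hc⟩ := hu
  refine (Submodule.mem_span_range_iff_exists_fun ℚ).2 ⟨c, funext fun j => ?_⟩
  simpa using (hc j).symm

theorem isDirect_of_linearIndependent {ι₁ ι₂ κ : Type*} [Fintype ι₁] [Fintype ι₂]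
    {S T : AddSubmonoid (κ → ℕ)} {e₁ : ι₁ → κ → ℚ} {e₂ : ι₂ → κ → ℚ}
    (he : LinearIndependent ℚ (Sum.elim e₁ e₂))
    (hS : ∀ u ∈ S, ∃ c : ι₁ → ℚ, ∀ j, (u j : ℚ) = ∑ t, c t * e₁ t j)
    (hT : ∀ w ∈ T, ∃ c : ι₂ → ℚ, ∀ j, (w j : ℚ) = ∑ t, c t * e₂ t j) : IsDirect S T :=
  isDirect_of_disjoint (φ := (Nat.castAddMonoidHom ℚ).compLeft κ) Nat.cast_injective.comp_left
    (linearIndependent_sum.1 he).2.2 (fun u hu => natCast_comp_mem_span (hS u hu))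
    fun w hw => natCast_comp_mem_span (hT w hw)

end Direct

section MonomialMap

variable {R σ τ υ : Type*} [CommSemiring R]

/-- The linear map `MvPolynomial σ R → MvPolynomial τ R` which applies `c` to the exponent of each
monomial. -/
def monomialMap (c : (σ →₀ ℕ) → τ →₀ ℕ) : MvPolynomial σ R →ₗ[R] MvPolynomial τ R :=
  (basisMonomials σ R).constr R fun e => monomial (c e) 1

@[simp]
theorem monomialMap_monomial (c : (σ →₀ ℕ) → τ →₀ ℕ) (e : σ →₀ ℕ) (r : R) :
    monomialMap c (monomial e r) = monomial (c e) r := by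
  have h_one : monomialMap c (monomial e (1 : R)) = monomial (c e) 1 :=
    (basisMonomials σ R).constr_basis R _ e
  rw [← mul_one r, ← smul_eq_mul, ← smul_monomial, map_smul, h_one, smul_monomial]

theorem monomialMap_monomialMap (c : (τ →₀ ℕ) → υ →₀ ℕ) (c' : (σ →₀ ℕ) → τ →₀ ℕ)
    (p : MvPolynomial σ R) : monomialMap c (monomialMap c' p) = monomialMap (c ∘ c') p := by
  induction p using MvPolynomial.induction_on' with
  | monomial e r => simp only [monomialMap_monomial, Function.comp_apply]
  | add p q hp hq => simp only [map_add, hp, hq]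

theorem monomialMap_eq_zero_of_factorsThrough {c : (σ →₀ ℕ) → τ →₀ ℕ} {c' : (σ →₀ ℕ) → υ →₀ ℕ}
    (hc : Function.FactorsThrough c c') {p : MvPolynomial σ R} (hp : monomialMap c' p = 0) :
    monomialMap c p = 0 := by
  obtain ⟨e, rfl⟩ := (Function.factorsThrough_iff c).1 hc
  rw [← monomialMap_monomialMap, hp, map_zero]

theorem rename_eq_monomialMap (f : σ → τ) (p : MvPolynomial σ R) :
    rename f p = monomialMap (Finsupp.mapDomain f) p := by
  induction p using MvPolynomial.induction_on' with
  | monomial e r => rw [rename_monomial, monomialMap_monomial]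
  | add p q hp hq => rw [map_add, map_add, hp, hq]

end MonomialMap

section NormalForm

variable {K : Type*} [Field K] {n d : ℕ} {a : Fin n → Fin d → ℕ}

theorem mem_toricIdeal_iff {p : MvPolynomial (Fin n) K} :
    p ∈ toricIdeal K a ↔ monomialMap (Finsupp.equivFunOnFinite.symm ∘ gammaDeg a) p = 0 := by
  suffices h : aeval (fun i => monomial (Finsupp.equivFunOnFinite.symm (a i)) (1 : K)) p
      = monomialMap (Finsupp.equivFunOnFinite.symm ∘ gammaDeg a) p by
    rw [toricIdeal, RingHom.mem_ker, h]
  induction p using MvPolynomial.induction_on' with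
  | add p q hp hq => rw [map_add, map_add, hp, hq]
  | monomial e r =>
    have hdeg : ∑ i, e i • Finsupp.equivFunOnFinite.symm (a i)
        = Finsupp.equivFunOnFinite.symm (gammaDeg a e) := by
      ext j
      simp [gammaDeg, Finsupp.finsetSum_apply]
    rw [aeval_monomial, monomialMap_monomial, Function.comp_apply, ← hdeg,
      Finsupp.prod_fintype _ _ fun i => pow_zero _]
    simp only [monomial_pow, one_pow, ← monomial_sum_one]
    rw [algebraMap_eq, C_mul_monomial, mul_one]

theorem monomialMap_eq_zero_of_mem_toricIdeal {τ : Type*} {c : (Fin n →₀ ℕ) → τ →₀ ℕ}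
    (hc : Function.FactorsThrough c (gammaDeg a)) {p : MvPolynomial (Fin n) K}
    (hp : p ∈ toricIdeal K a) : monomialMap c p = 0 :=
  monomialMap_eq_zero_of_factorsThrough
    (fun _ _ h => hc (Finsupp.equivFunOnFinite.symm.injective h)) (mem_toricIdeal_iff.1 hp)

theorem rename_mem_toricIdeal_iff {m : ℕ} {f : Fin m → Fin n} {p : MvPolynomial (Fin m) K} :
    rename f p ∈ toricIdeal K a ↔ p ∈ toricIdeal K (a ∘ f) := by
  have hdeg : (Finsupp.equivFunOnFinite.symm ∘ gammaDeg a) ∘ Finsupp.mapDomain f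
      = Finsupp.equivFunOnFinite.symm ∘ gammaDeg (a ∘ f) :=
    funext fun e => congrArg _ (gammaDeg_mapDomain a f e)
  rw [mem_toricIdeal_iff, mem_toricIdeal_iff, rename_eq_monomialMap, monomialMap_monomialMap,
    hdeg]

/-- A chosen exponent with the same `Γ`-degree as `e`. -/
def normalExponent (a : Fin n → Fin d → ℕ) (e : Fin n →₀ ℕ) : Fin n →₀ ℕ :=
  Function.invFun (gammaDeg a) (gammaDeg a e)

theorem gammaDeg_normalExponent (a : Fin n → Fin d → ℕ) (e : Fin n →₀ ℕ) :
    gammaDeg a (normalExponent a e) = gammaDeg a e :=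
  Function.invFun_eq ⟨e, rfl⟩

theorem normalExponent_factorsThrough (a : Fin n → Fin d → ℕ) :
    Function.FactorsThrough (normalExponent a) (gammaDeg a) :=
  fun _ _ h => congrArg (Function.invFun (gammaDeg a)) h

theorem normalExponent_normalExponent (a : Fin n → Fin d → ℕ) (e : Fin n →₀ ℕ) :
    normalExponent a (normalExponent a e) = normalExponent a e :=
  normalExponent_factorsThrough a (gammaDeg_normalExponent a e)

/-- The idempotent `K`-linear map with kernel `I_Γ` that replaces each monomial by the chosen
monomial of the same `Γ`-degree: a section of `K[x₁,…,x_n] → K[Γ]` composed with that map. -/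
def normalForm (K : Type*) [Field K] (a : Fin n → Fin d → ℕ) :
    MvPolynomial (Fin n) K →ₗ[K] MvPolynomial (Fin n) K :=
  monomialMap (normalExponent a)

theorem normalForm_eq_zero_iff {p : MvPolynomial (Fin n) K} :
    normalForm K a p = 0 ↔ p ∈ toricIdeal K a := by
  refine ⟨fun h => mem_toricIdeal_iff.2 ?_,
    monomialMap_eq_zero_of_mem_toricIdeal (normalExponent_factorsThrough a)⟩
  exact monomialMap_eq_zero_of_factorsThrough
    (fun e e' (hee : normalExponent a e = normalExponent a e') => by
      rw [Function.comp_apply, Function.comp_apply, ← gammaDeg_normalExponent a e, hee,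
        gammaDeg_normalExponent a e']) h

theorem normalForm_normalForm (p : MvPolynomial (Fin n) K) :
    normalForm K a (normalForm K a p) = normalForm K a p := by
  rw [normalForm, monomialMap_monomialMap]
  exact congrArg (monomialMap · p) (funext (normalExponent_normalExponent a))

end NormalForm

section SubmatrixMulVec

open scoped Matrix

variable {R ι κ ι' κ' : Type*} [NonUnitalNonAssocSemiring R] [Fintype κ] [Fintype κ']
  (A : Matrix ι κ R) {f : ι' → ι} {g : κ' → κ}

theorem mulVec_comp_of_forall_row (hg : Function.Injective g)
    (hA : ∀ i, ∀ j ∉ Set.range g, A (f i) j = 0) (v : κ → R) :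
    (A *ᵥ v) ∘ f = A.submatrix f g *ᵥ (v ∘ g) := by
  ext i
  exact (Fintype.sum_of_injective g hg _ _ (fun j hj => mul_eq_zero_of_left (hA i j hj) _)
    fun _ => rfl).symm

theorem mulVec_extend_of_forall_col (hf : Function.Injective f) (hg : Function.Injective g)
    (hA : ∀ i ∉ Set.range f, ∀ j, A i (g j) = 0) (v : κ' → R) :
    A *ᵥ Function.extend g v 0 = Function.extend f (A.submatrix f g *ᵥ v) 0 := by
  have hsum (i : ι) : (A *ᵥ Function.extend g v 0) i = ∑ j, A i (g j) * v j :=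
    (Fintype.sum_of_injective g hg _ _
      (fun j hj => by rw [Function.extend_apply' _ _ _ hj, Pi.zero_apply, mul_zero])
      fun j => by rw [hg.extend_apply]).symm
  ext i
  by_cases hi : i ∈ Set.range f
  · obtain ⟨i, rfl⟩ := hi
    rw [hsum, hf.extend_apply]
    rfl
  · rw [hsum, Function.extend_apply' _ _ _ hi, Pi.zero_apply]
    exact Finset.sum_eq_zero fun j _ => by rw [hA i hi, zero_mul]

end SubmatrixMulVec

section TotalResolution

open scoped Matrix

variable {K : Type*} [Field K] {n d : ℕ} {a : Fin n → Fin d → ℕ}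

/-- A minimal `Γ`-graded free resolution of `K[Γ]` in which all free modules are collected into a
single one with basis `J`; the differential is the matrix `D`, with `D k j` the coefficient of the
generator `k` in the image of the generator `j`. Exactness at homological degree `0` and at higher
degrees becomes one condition: a cycle whose `base` coordinate lies in `I_Γ` is a boundary. -/
structure TotalResolution (K : Type*) [Field K] {n d : ℕ} (a : Fin n → Fin d → ℕ) (J : Type*)
    [Fintype J] where
  /-- homological degrees of the generators -/
  hdeg : J → ℕ
  /-- `Γ`-degrees of the generators -/
  deg : J → Fin d → ℕ
  /-- the total differential -/
  D : Matrix J J (MvPolynomial (Fin n) K)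
  /-- the generator of the free module in homological degree `0` -/
  base : J
  hdeg_eq_zero_iff : ∀ j, hdeg j = 0 ↔ j = base
  deg_base : deg base = 0
  hdeg_eq_of_ne_zero : ∀ k j, D k j ≠ 0 → hdeg j = hdeg k + 1
  deg_eq_of_mem_support : ∀ k j, ∀ e ∈ (D k j).support, deg j = gammaDeg a e + deg k
  coeff_zero : ∀ k j, coeff 0 (D k j) = 0
  D_mul_D : D * D = 0
  D_base_mem : ∀ j, D base j ∈ toricIdeal K a
  exact : ∀ v, D *ᵥ v = 0 → v base ∈ toricIdeal K a → ∃ w, D *ᵥ w = v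

/-- Distinct generators of equal homological degree have incomparable `Γ`-degrees. -/
def TotalResolution.StronglyIndispensable {J : Type*} [Fintype J]
    (B : TotalResolution K a J) : Prop :=
  ∀ j j', B.hdeg j = B.hdeg j' → GammaLE a (B.deg j') (B.deg j) → j = j'

namespace MinFreeRes

variable (F : MinFreeRes K a)

/-- The `i`-th differential of a minimal free resolution, acting on column vectors. -/
def differential (i : ℕ) : Matrix (Fin (F.β i)) (Fin (F.β (i + 1))) (MvPolynomial (Fin n) K) :=
  Matrix.of fun j' j => F.mat i j j'

instance subsingleton_zero : Subsingleton (Fin (F.β 0)) := by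
  rw [F.β0]
  infer_instance

end MinFreeRes

theorem mem_ker_augmentation_iff {R ι : Type*} [CommRing R] [Fintype ι] [DecidableEq ι]
    [Subsingleton ι] (I : Ideal R) (v : ι → R) (j : ι) :
    v ∈ LinearMap.ker (I.mkQ ∘ₗ LinearMap.lsum R (fun _ : ι => R) ℕ fun _ => LinearMap.id) ↔
      v j ∈ I := by
  have := uniqueOfSubsingleton j
  rw [LinearMap.mem_ker, LinearMap.comp_apply, Submodule.mkQ_apply, Submodule.Quotient.mk_eq_zero,
    LinearMap.lsum_apply, LinearMap.sum_apply, Fintype.sum_subsingleton _ j]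
  rfl

namespace MinFreeRes

variable (F : MinFreeRes K a)

theorem mem_toricIdeal_iff_exists (v : Fin (F.β 0) → MvPolynomial (Fin n) K) (j : Fin (F.β 0)) :
    v j ∈ toricIdeal K a ↔ ∃ w, F.differential 0 *ᵥ w = v := by
  rw [← mem_ker_augmentation_iff, F.exact_zero]
  rfl

theorem differential_mulVec_eq_zero_iff (i : ℕ)
    (v : Fin (F.β (i + 1)) → MvPolynomial (Fin n) K) :
    F.differential i *ᵥ v = 0 ↔ ∃ w, F.differential (i + 1) *ᵥ w = v :=
  SetLike.ext_iff.1 (F.exact_succ i) v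

theorem finite_generators : Finite (Σ i, Fin (F.β i)) := by
  obtain ⟨N, hN⟩ := F.bdd
  refine Finite.of_surjective
    (fun x : Σ i : Fin N, Fin (F.β i) => (⟨x.1, x.2⟩ : Σ i, Fin (F.β i))) ?_
  rintro ⟨i, j⟩
  have hi : i < N := lt_of_not_ge fun h => j.pos.ne' (hN i h)
  exact ⟨⟨⟨i, hi⟩, j⟩, rfl⟩

theorem le_pd {i : ℕ} (j : Fin (F.β i)) : i ≤ F.pd := by
  obtain ⟨N, hN⟩ := F.bdd
  exact le_csSup ⟨N, fun k hk => le_of_not_ge fun h => hk (hN k h)⟩ j.pos.ne'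

/-- The total differential: the block matrix of all the differentials. -/
def totalMatrix : Matrix (Σ i, Fin (F.β i)) (Σ i, Fin (F.β i)) (MvPolynomial (Fin n) K) :=
  fun x y => if h : y.1 = x.1 + 1 then F.differential x.1 x.2 (Fin.cast (by rw [h]) y.2) else 0

theorem totalMatrix_apply (i : ℕ) (j' : Fin (F.β i)) (j : Fin (F.β (i + 1))) :
    F.totalMatrix ⟨i, j'⟩ ⟨i + 1, j⟩ = F.mat i j j' :=
  dif_pos rfl

theorem totalMatrix_submatrix (i : ℕ) :
    F.totalMatrix.submatrix (Sigma.mk i) (Sigma.mk (i + 1)) = F.differential i :=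
  Matrix.ext fun j' j => F.totalMatrix_apply i j' j

theorem totalMatrix_eq_zero {i : ℕ} (j' : Fin (F.β i)) {y : Σ i, Fin (F.β i)}
    (hy : y ∉ Set.range (Sigma.mk (i + 1))) : F.totalMatrix ⟨i, j'⟩ y = 0 := by
  obtain ⟨k, j⟩ := y
  exact dif_neg fun h => hy (by obtain rfl : k = i + 1 := h; exact ⟨j, rfl⟩)

theorem exists_of_totalMatrix_ne_zero {i : ℕ} {j' : Fin (F.β i)} {y : Σ i, Fin (F.β i)}
    (hy : F.totalMatrix ⟨i, j'⟩ y ≠ 0) : ∃ j, y = ⟨i + 1, j⟩ := by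
  by_contra! h
  exact hy (F.totalMatrix_eq_zero j' fun ⟨j, hj⟩ => h j hj.symm)

theorem totalMatrix_mem_toricIdeal (j : Fin (F.β 0)) (y : Σ i, Fin (F.β i)) :
    F.totalMatrix ⟨0, j⟩ y ∈ toricIdeal K a := by
  by_cases hy : y ∈ Set.range (Sigma.mk (0 + 1))
  · obtain ⟨j', rfl⟩ := hy
    exact (F.mem_toricIdeal_iff_exists (fun j => F.totalMatrix ⟨0, j⟩ ⟨1, j'⟩) j).2
      ⟨Pi.single j' 1, Matrix.mulVec_single_one _ _⟩
  · rw [F.totalMatrix_eq_zero j hy]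
    exact zero_mem _

variable [Fintype (Σ i, Fin (F.β i))]

theorem totalMatrix_mulVec (v : (Σ i, Fin (F.β i)) → MvPolynomial (Fin n) K) (i : ℕ) :
    (fun j => (F.totalMatrix *ᵥ v) ⟨i, j⟩) = F.differential i *ᵥ fun j => v ⟨i + 1, j⟩ := by
  rw [← F.totalMatrix_submatrix]
  exact mulVec_comp_of_forall_row _ sigma_mk_injective (fun j' _ => F.totalMatrix_eq_zero j') v

theorem totalMatrix_mul_totalMatrix : F.totalMatrix * F.totalMatrix = 0 := by
  refine Matrix.ext_iff_mulVec.2 fun v => funext fun ⟨i, j⟩ => ?_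
  have hzero : (fun j => (F.totalMatrix *ᵥ (F.totalMatrix *ᵥ v)) ⟨i, j⟩) = 0 := by
    rw [totalMatrix_mulVec, totalMatrix_mulVec, differential_mulVec_eq_zero_iff]
    exact ⟨_, rfl⟩
  rw [← Matrix.mulVec_mulVec, Matrix.zero_mulVec]
  exact congrFun hzero j

theorem exists_totalMatrix_mulVec_eq {v : (Σ i, Fin (F.β i)) → MvPolynomial (Fin n) K}
    (hv : F.totalMatrix *ᵥ v = 0) {j₀ : Fin (F.β 0)} (hv₀ : v ⟨0, j₀⟩ ∈ toricIdeal K a) :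
    ∃ w, F.totalMatrix *ᵥ w = v := by
  have hexact (i : ℕ) : ∃ w, F.differential i *ᵥ w = fun j => v ⟨i, j⟩ := by
    cases i with
    | zero => exact (F.mem_toricIdeal_iff_exists _ j₀).1 hv₀
    | succ i =>
      rw [← differential_mulVec_eq_zero_iff, ← totalMatrix_mulVec, hv]
      rfl
  choose w hw using hexact
  let w' : (Σ i, Fin (F.β i)) → MvPolynomial (Fin n) K
    | ⟨0, _⟩ => 0
    | ⟨i + 1, j⟩ => w i j
  refine ⟨w', funext fun ⟨i, j⟩ => ?_⟩
  exact congrFun ((F.totalMatrix_mulVec w' i).trans (hw i)) j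

/-- The total resolution of a minimal free resolution. -/
def toTotalResolution : TotalResolution K a (Σ i, Fin (F.β i)) where
  hdeg x := x.1
  deg x := F.deg x.1 x.2
  D := F.totalMatrix
  base := ⟨0, Fin.cast F.β0.symm 0⟩
  hdeg_eq_zero_iff := by
    rintro ⟨i, j⟩
    refine ⟨?_, congrArg Sigma.fst⟩
    rintro (rfl : i = 0)
    exact congrArg _ (Subsingleton.elim _ _)
  deg_base := F.deg0 _
  hdeg_eq_of_ne_zero := by
    rintro ⟨i, j'⟩ y hy
    obtain ⟨j, rfl⟩ := F.exists_of_totalMatrix_ne_zero hy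
    rfl
  deg_eq_of_mem_support := by
    rintro ⟨i, j'⟩ y e he
    obtain ⟨j, rfl⟩ := F.exists_of_totalMatrix_ne_zero (ne_zero_iff.2 ⟨e, mem_support_iff.1 he⟩)
    rw [totalMatrix_apply] at he
    exact F.homog i j j' e he
  coeff_zero := by
    rintro ⟨i, j'⟩ y
    by_contra hy
    obtain ⟨j, rfl⟩ := F.exists_of_totalMatrix_ne_zero (ne_zero_iff.2 ⟨0, hy⟩)
    exact hy (by rw [totalMatrix_apply, F.minimal])
  D_mul_D := F.totalMatrix_mul_totalMatrix
  D_base_mem y := F.totalMatrix_mem_toricIdeal _ y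
  exact _ hv hv₀ := F.exists_totalMatrix_mulVec_eq hv hv₀

theorem toTotalResolution_stronglyIndispensable (hF : SIFRCond F) :
    F.toTotalResolution.StronglyIndispensable := by
  rintro ⟨i, j⟩ ⟨i', j'⟩ (rfl : i = i') ⟨γ, hγ, hdeg⟩
  refine congrArg _ ?_
  cases i with
  | zero => exact Subsingleton.elim j j'
  | succ i =>
    by_contra hj
    exact hF (i + 1) (Nat.le_add_left 1 i) (F.le_pd j) j j' hj γ hγ hdeg

end MinFreeRes

end TotalResolution

section Slices

open scoped Matrix

namespace TotalResolution

variable {K : Type*} [Field K] {n d : ℕ} {a : Fin n → Fin d → ℕ} {J : Type*} [Fintype J]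
  (B : TotalResolution K a J)

theorem hdeg_base : B.hdeg B.base = 0 :=
  (B.hdeg_eq_zero_iff _).2 rfl

theorem D_apply_base (k : J) : B.D k B.base = 0 := by
  by_contra hk
  exact absurd (B.hdeg_eq_of_ne_zero k B.base hk) (by rw [B.hdeg_base]; exact Nat.zero_ne_add_one _)

theorem D_apply_self (j : J) : B.D j j = 0 := by
  by_contra hj
  exact (B.hdeg j).succ_ne_self (B.hdeg_eq_of_ne_zero j j hj).symm

theorem D_mulVec_D_mulVec (v : J → MvPolynomial (Fin n) K) : B.D *ᵥ (B.D *ᵥ v) = 0 := by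
  rw [Matrix.mulVec_mulVec, B.D_mul_D, Matrix.zero_mulVec]

theorem D_mulVec_base_mem (v : J → MvPolynomial (Fin n) K) :
    (B.D *ᵥ v) B.base ∈ toricIdeal K a :=
  Ideal.sum_mem _ fun j _ => Ideal.mul_mem_right _ _ (B.D_base_mem j)

/-- An enumeration of the generators of homological degree `i`. -/
def gen (i : ℕ) (k : Fin (Nat.card {j // B.hdeg j = i})) : J :=
  ((Finite.equivFin {j // B.hdeg j = i}).symm k).1

theorem gen_injective (i : ℕ) : Function.Injective (B.gen i) :=
  Subtype.val_injective.comp (Equiv.injective _)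

theorem mem_range_gen_iff {i : ℕ} {j : J} : j ∈ Set.range (B.gen i) ↔ B.hdeg j = i := by
  refine ⟨?_, fun hj => ⟨Finite.equivFin _ ⟨j, hj⟩, ?_⟩⟩
  · rintro ⟨k, rfl⟩
    exact ((Finite.equivFin {j // B.hdeg j = i}).symm k).2
  · rw [gen, Equiv.symm_apply_apply]

theorem hdeg_gen (i : ℕ) (k : Fin (Nat.card {j // B.hdeg j = i})) : B.hdeg (B.gen i k) = i :=
  B.mem_range_gen_iff.1 ⟨k, rfl⟩

theorem gen_zero (k : Fin (Nat.card {j // B.hdeg j = 0})) : B.gen 0 k = B.base :=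
  (B.hdeg_eq_zero_iff _).1 (B.hdeg_gen 0 k)

theorem card_hdeg_eq_zero : Nat.card {j // B.hdeg j = 0} = 1 := by
  simp only [B.hdeg_eq_zero_iff, Nat.card_unique]

theorem exists_forall_card_hdeg_eq_zero :
    ∃ N, ∀ i, N ≤ i → Nat.card {j // B.hdeg j = i} = 0 := by
  obtain ⟨N, hN⟩ := (Set.finite_range B.hdeg).bddAbove
  refine ⟨N + 1, fun i hi => ?_⟩
  have : IsEmpty {j // B.hdeg j = i} :=
    ⟨fun j => (hN ⟨j.1, j.2⟩).not_gt hi⟩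
  exact Nat.card_of_isEmpty

/-- The block of the total differential from homological degree `i + 1` to `i`. -/
def slice (i : ℕ) : Matrix (Fin (Nat.card {j // B.hdeg j = i}))
    (Fin (Nat.card {j // B.hdeg j = i + 1})) (MvPolynomial (Fin n) K) :=
  B.D.submatrix (B.gen i) (B.gen (i + 1))

theorem D_mulVec_extend_gen (i : ℕ)
    (v : Fin (Nat.card {j // B.hdeg j = i + 1}) → MvPolynomial (Fin n) K) :
    B.D *ᵥ Function.extend (B.gen (i + 1)) v 0 =
      Function.extend (B.gen i) (B.slice i *ᵥ v) 0 := by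
  refine mulVec_extend_of_forall_col B.D (B.gen_injective i) (B.gen_injective (i + 1))
    (fun k hk j => ?_) v
  by_contra hkj
  have hdeg := B.hdeg_eq_of_ne_zero _ _ hkj
  rw [B.hdeg_gen] at hdeg
  exact hk (B.mem_range_gen_iff.2 (Nat.succ_injective hdeg).symm)

theorem D_mulVec_extend_gen_zero
    (v : Fin (Nat.card {j // B.hdeg j = 0}) → MvPolynomial (Fin n) K) :
    B.D *ᵥ Function.extend (B.gen 0) v 0 = 0 := by
  refine funext fun k => Finset.sum_eq_zero fun j _ => ?_
  by_cases hj : j ∈ Set.range (B.gen 0)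
  · obtain ⟨j, rfl⟩ := hj
    rw [B.gen_zero]
    exact mul_eq_zero_of_left (B.D_apply_base k) _
  · rw [Function.extend_apply' _ _ _ hj, Pi.zero_apply, mul_zero]

theorem D_mulVec_comp_gen (i : ℕ) (w : J → MvPolynomial (Fin n) K) :
    (B.D *ᵥ w) ∘ B.gen i = B.slice i *ᵥ (w ∘ B.gen (i + 1)) := by
  refine mulVec_comp_of_forall_row B.D (B.gen_injective (i + 1)) (fun k j hj => ?_) w
  by_contra hkj
  have hdeg := B.hdeg_eq_of_ne_zero _ _ hkj
  rw [B.hdeg_gen] at hdeg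
  exact hj (B.mem_range_gen_iff.2 hdeg)

theorem exists_slice_mulVec_eq {i : ℕ}
    {v : Fin (Nat.card {j // B.hdeg j = i}) → MvPolynomial (Fin n) K}
    (hv : B.D *ᵥ Function.extend (B.gen i) v 0 = 0)
    (hbase : Function.extend (B.gen i) v 0 B.base ∈ toricIdeal K a) :
    ∃ w, B.slice i *ᵥ w = v := by
  obtain ⟨w, hw⟩ := B.exact _ hv hbase
  refine ⟨w ∘ B.gen (i + 1), ?_⟩
  rw [← D_mulVec_comp_gen, hw, Function.extend_comp (B.gen_injective i)]

theorem slice_mulVec_eq_zero_iff (i : ℕ)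
    (v : Fin (Nat.card {j // B.hdeg j = i + 1}) → MvPolynomial (Fin n) K) :
    B.slice i *ᵥ v = 0 ↔ ∃ w, B.slice (i + 1) *ᵥ w = v := by
  constructor
  · intro hv
    have hbase : B.base ∉ Set.range (B.gen (i + 1)) := by
      rw [B.mem_range_gen_iff, B.hdeg_base]
      exact Nat.zero_ne_add_one i
    refine B.exists_slice_mulVec_eq ?_ ?_
    · rw [D_mulVec_extend_gen, hv, Function.extend_zero]
    · rw [Function.extend_apply' _ _ _ hbase]
      exact zero_mem _
  · rintro ⟨w, rfl⟩
    have hDD := B.D_mulVec_D_mulVec (Function.extend (B.gen (i + 1 + 1)) w 0)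
    rw [D_mulVec_extend_gen, D_mulVec_extend_gen] at hDD
    rw [← Function.extend_comp (B.gen_injective i) (B.slice i *ᵥ B.slice (i + 1) *ᵥ w) 0, hDD]
    rfl

theorem mem_toricIdeal_iff_exists_slice
    (v : Fin (Nat.card {j // B.hdeg j = 0}) → MvPolynomial (Fin n) K)
    (k : Fin (Nat.card {j // B.hdeg j = 0})) :
    v k ∈ toricIdeal K a ↔ ∃ w, B.slice 0 *ᵥ w = v := by
  have hbase : Function.extend (B.gen 0) v 0 B.base = v k := by
    rw [← B.gen_zero k, (B.gen_injective 0).extend_apply]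
  constructor
  · exact fun hv => B.exists_slice_mulVec_eq (B.D_mulVec_extend_gen_zero v) (hbase ▸ hv)
  · rintro ⟨w, rfl⟩
    rw [← hbase, ← D_mulVec_extend_gen]
    exact B.D_mulVec_base_mem _

/-- The minimal free resolution with the same generators. -/
def toMinFreeRes : MinFreeRes K a where
  β i := Nat.card {j // B.hdeg j = i}
  β0 := B.card_hdeg_eq_zero
  bdd := B.exists_forall_card_hdeg_eq_zero
  deg i k := B.deg (B.gen i k)
  deg0 k := by rw [B.gen_zero, B.deg_base]
  mat i k k' := B.slice i k' k
  homog i k k' := B.deg_eq_of_mem_support _ _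
  minimal i k k' := B.coeff_zero _ _
  exact_zero := by
    have hcard := B.card_hdeg_eq_zero
    have : Subsingleton (Fin (Nat.card {j // B.hdeg j = 0})) := by
      rw [hcard]
      infer_instance
    ext1 v
    rw [mem_ker_augmentation_iff _ v (Fin.cast hcard.symm 0), B.mem_toricIdeal_iff_exists_slice]
    rfl
  exact_succ i := SetLike.ext (B.slice_mulVec_eq_zero_iff i)

theorem StronglyIndispensable.sifrCond (hB : B.StronglyIndispensable) :
    SIFRCond B.toMinFreeRes := by
  intro i _ _ k k' hk γ hγ hdeg
  exact hk (B.gen_injective i (hB _ _ ((B.hdeg_gen i k).trans (B.hdeg_gen i k').symm)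
    ⟨γ, hγ, hdeg⟩))

end TotalResolution

theorem hasSIFR_iff_exists_totalResolution {K : Type*} [Field K] {n d : ℕ}
    {a : Fin n → Fin d → ℕ} :
    HasSIFR K a ↔ ∃ (J : Type) (_ : Fintype J) (B : TotalResolution K a J),
      B.StronglyIndispensable := by
  constructor
  · rintro ⟨F, hF⟩
    have := F.finite_generators
    have := Fintype.ofFinite (Σ i, Fin (F.β i))
    exact ⟨_, _, F.toTotalResolution, F.toTotalResolution_stronglyIndispensable hF⟩
  · rintro ⟨J, _, B, hB⟩
    exact ⟨B.toMinFreeRes, hB.sifrCond⟩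

end Slices

section Descent

open scoped Matrix

namespace TotalResolution

variable {K : Type*} [Field K] {n d : ℕ} {a : Fin n → Fin d → ℕ} {J : Type*} [Fintype J]
  (B : TotalResolution K a J)

theorem coeff_zero_D_mulVec (v : J → MvPolynomial (Fin n) K) (k : J) :
    coeff 0 ((B.D *ᵥ v) k) = 0 := by
  simp only [Matrix.mulVec, dotProduct, coeff_sum, ← constantCoeff_eq, map_mul]
  exact Finset.sum_eq_zero fun j _ => mul_eq_zero_of_left (B.coeff_zero k j) _

include B in
theorem coeff_zero_of_mem_toricIdeal {p : MvPolynomial (Fin n) K} (hp : p ∈ toricIdeal K a) :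
    coeff 0 p = 0 := by
  classical
  obtain ⟨w, hw⟩ := B.exact (Pi.single B.base p)
    (by
      rw [Matrix.mulVec_single]
      exact funext fun k => mul_eq_zero_of_left (B.D_apply_base k) p)
    (by rwa [Pi.single_eq_same])
  have hcoeff := B.coeff_zero_D_mulVec w B.base
  rwa [hw, Pi.single_eq_same] at hcoeff

include B in
theorem generator_ne_zero (i : Fin n) : a i ≠ 0 := by
  intro hi
  have hmem : (X i - 1 : MvPolynomial (Fin n) K) ∈ toricIdeal K a := by
    rw [toricIdeal, RingHom.mem_ker, map_sub, map_one, aeval_X, hi, sub_eq_zero]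
    exact congrArg (monomial · 1) (Finsupp.ext fun _ => rfl)
  have hcoeff := B.coeff_zero_of_mem_toricIdeal hmem
  rw [coeff_sub, coeff_zero_X, coeff_zero_one, zero_sub, neg_eq_zero] at hcoeff
  exact one_ne_zero hcoeff

theorem exists_D_ne_zero {j : J} (hj : j ≠ B.base) : ∃ k, B.D k j ≠ 0 := by
  classical
  by_contra! hcol
  obtain ⟨w, hw⟩ := B.exact (Pi.single j 1)
    (by rw [Matrix.mulVec_single_one]; exact funext hcol)
    (by rw [Pi.single_eq_of_ne hj.symm]; exact zero_mem _)
  have hcoeff := B.coeff_zero_D_mulVec w j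
  rw [hw, Pi.single_eq_same, coeff_zero_one] at hcoeff
  exact one_ne_zero hcoeff

theorem exists_hdeg_eq_add_one {j : J} (hj : B.hdeg j ≠ 0) :
    ∃ k, B.hdeg j = B.hdeg k + 1 ∧ GammaLE a (B.deg k) (B.deg j) ∧ B.deg k < B.deg j := by
  obtain ⟨k, hk⟩ := B.exists_D_ne_zero fun h => hj ((B.hdeg_eq_zero_iff j).2 h)
  obtain ⟨e, he⟩ := support_nonempty.2 hk
  have hdeg := B.deg_eq_of_mem_support k j e he
  have hle : GammaLE a (B.deg k) (B.deg j) := ⟨_, gammaDeg_mem_affSemigroup a e, hdeg⟩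
  refine ⟨k, B.hdeg_eq_of_ne_zero k j hk, hle, hle.le.lt_of_ne fun h => ?_⟩
  rw [← h, right_eq_add, gammaDeg_eq_zero_iff B.generator_ne_zero] at hdeg
  rw [hdeg, mem_support_iff, B.coeff_zero] at he
  exact he rfl

theorem exists_hdeg_eq {j : J} {q : ℕ} (hq : q < B.hdeg j) :
    ∃ k, B.hdeg k = q ∧ GammaLE a (B.deg k) (B.deg j) ∧ B.deg k < B.deg j := by
  induction hi : B.hdeg j generalizing j with
  | zero => omega
  | succ i ih =>
    obtain ⟨k, hk, hle, hlt⟩ := B.exists_hdeg_eq_add_one (j := j) (by omega)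
    rcases (show q ≤ B.hdeg k by omega).eq_or_lt with rfl | hqk
    · exact ⟨k, rfl, hle, hlt⟩
    · obtain ⟨k', hk', hle', hlt'⟩ := ih hqk (by omega)
      exact ⟨k', hk', hle'.trans hle, hlt'.trans hlt⟩

theorem deg_mem_affSemigroup (j : J) : B.deg j ∈ affSemigroup a := by
  by_cases hj : B.hdeg j = 0
  · rw [(B.hdeg_eq_zero_iff j).1 hj, B.deg_base]
    exact zero_mem _
  · obtain ⟨k, hk, ⟨γ, hγ, hdeg⟩, -⟩ := B.exists_hdeg_eq (Nat.pos_of_ne_zero hj)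
    rwa [hdeg, (B.hdeg_eq_zero_iff k).1 hk, B.deg_base, add_zero]

theorem StronglyIndispensable.hdeg_le {B : TotalResolution K a J} (hB : B.StronglyIndispensable)
    {j j' : J} (hle : GammaLE a (B.deg j') (B.deg j)) : B.hdeg j' ≤ B.hdeg j := by
  by_contra! hlt
  obtain ⟨k, hk, hkj', hklt⟩ := B.exists_hdeg_eq hlt
  obtain rfl : j = k := hB j k hk.symm (hkj'.trans hle)
  exact hklt.not_ge hle.le

end TotalResolution

end Descent

section Face

open scoped Matrix

variable {K : Type*} [Field K] {m n d : ℕ} {a : Fin n → Fin d → ℕ} {f : Fin m → Fin n}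

/-- The generators `a (f i)` span a face of `Γ`: a monomial whose degree lies in their span only
involves the variables in the range of `f`. -/
def IsFace (a : Fin n → Fin d → ℕ) (f : Fin m → Fin n) : Prop :=
  ∀ e : Fin n →₀ ℕ, gammaDeg a e ∈ affSemigroup (a ∘ f) → (e.support : Set (Fin n)) ⊆ Set.range f

theorem affSemigroup_comp_le : affSemigroup (a ∘ f) ≤ affSemigroup a :=
  AddSubmonoid.closure_mono (Set.range_comp_subset_range f a)

theorem gammaDeg_mem_of_support_subset (hf : Function.Injective f) {e : Fin n →₀ ℕ}
    (he : (e.support : Set (Fin n)) ⊆ Set.range f) : gammaDeg a e ∈ affSemigroup (a ∘ f) := by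
  rw [← Finsupp.mapDomain_comapDomain f hf e he, gammaDeg_mapDomain]
  exact gammaDeg_mem_affSemigroup _ _

theorem IsFace.left_mem (hface : IsFace a f) (hf : Function.Injective f) {u v : Fin d → ℕ}
    (hu : u ∈ affSemigroup a) (hv : v ∈ affSemigroup a) (huv : u + v ∈ affSemigroup (a ∘ f)) :
    u ∈ affSemigroup (a ∘ f) := by
  obtain ⟨e, rfl⟩ := mem_affSemigroup_iff.1 hu
  obtain ⟨e', rfl⟩ := mem_affSemigroup_iff.1 hv
  rw [← gammaDeg_add] at huv
  exact gammaDeg_mem_of_support_subset hf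
    ((Finset.coe_subset.2 (Finsupp.support_mono le_self_add)).trans (hface _ huv))

theorem rename_killCompl_of_support_subset {R σ τ : Type*} [CommSemiring R] {f : σ → τ}
    (hf : Function.Injective f) {p : MvPolynomial τ R}
    (hp : ∀ e ∈ p.support, (e.support : Set τ) ⊆ Set.range f) :
    rename f (killCompl hf p) = p := by
  obtain ⟨q, rfl⟩ := exists_rename_eq_of_vars_subset_range p f hf fun i hi => by
    obtain ⟨e, he, hie⟩ := (mem_vars_iff_mem_support i).1 hi
    exact hp e he hie
  rw [killCompl_rename_app]

theorem killCompl_eq_zero_of_not_support_subset {R σ τ : Type*} [CommSemiring R] {f : σ → τ}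
    (hf : Function.Injective f) {p : MvPolynomial τ R}
    (hp : ∀ e ∈ p.support, ¬ (e.support : Set τ) ⊆ Set.range f) : killCompl hf p = 0 := by
  classical
  ext e
  rw [coeff_killCompl, coeff_zero]
  by_contra he
  refine hp _ (mem_support_iff.2 he) ?_
  rw [Finsupp.mapDomain_support_of_injective hf, Finset.coe_image]
  exact Set.image_subset_range _ _

namespace TotalResolution

variable {J : Type*} [Fintype J] (B : TotalResolution K a J)

theorem D_eq_zero_of_isFace (hf : Function.Injective f) (hface : IsFace a f) {k j : J}
    (hj : B.deg j ∈ affSemigroup (a ∘ f)) (hk : B.deg k ∉ affSemigroup (a ∘ f)) :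
    B.D k j = 0 := by
  by_contra hkj
  obtain ⟨e, he⟩ := support_nonempty.2 hkj
  rw [B.deg_eq_of_mem_support k j e he, add_comm] at hj
  exact hk (hface.left_mem hf (B.deg_mem_affSemigroup k) (gammaDeg_mem_affSemigroup a e) hj)

theorem rename_killCompl_D (hf : Function.Injective f) (hface : IsFace a f) (k : J) {j : J}
    (hj : B.deg j ∈ affSemigroup (a ∘ f)) : rename f (killCompl hf (B.D k j)) = B.D k j := by
  refine rename_killCompl_of_support_subset hf fun e he => hface e ?_
  rw [B.deg_eq_of_mem_support k j e he] at hj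
  exact hface.left_mem hf (gammaDeg_mem_affSemigroup a e) (B.deg_mem_affSemigroup k) hj

theorem killCompl_D_eq_zero (hf : Function.Injective f) {k j : J}
    (hk : B.deg k ∈ affSemigroup (a ∘ f)) (hj : B.deg j ∉ affSemigroup (a ∘ f)) :
    killCompl hf (B.D k j) = 0 := by
  refine killCompl_eq_zero_of_not_support_subset hf fun e he hsub => hj ?_
  rw [B.deg_eq_of_mem_support k j e he]
  exact add_mem (gammaDeg_mem_of_support_subset hf hsub) hk

/-- The generators whose `Γ`-degree lies in the face spanned by the `a (f i)`. -/
abbrev FaceGen (f : Fin m → Fin n) : Type _ :=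
  {j // B.deg j ∈ affSemigroup (a ∘ f)}

instance (f : Fin m → Fin n) : Fintype (B.FaceGen f) :=
  Fintype.ofFinite _

/-- The total differential restricted to the generators in a face, with the variables outside the
face set to zero. -/
def faceMatrix (hf : Function.Injective f) :
    Matrix (B.FaceGen f) (B.FaceGen f) (MvPolynomial (Fin m) K) :=
  (B.D.submatrix Subtype.val Subtype.val).map (killCompl hf)

/-- The inclusion of the free module on the generators in a face. -/
def faceExtend (u : B.FaceGen f → MvPolynomial (Fin m) K) : J → MvPolynomial (Fin n) K :=
  Function.extend Subtype.val (rename f ∘ u) 0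

/-- The retraction onto the free module on the generators in a face. -/
def faceRestrict (hf : Function.Injective f) (v : J → MvPolynomial (Fin n) K) :
    B.FaceGen f → MvPolynomial (Fin m) K :=
  (killCompl hf ∘ v) ∘ Subtype.val

theorem faceExtend_val (u : B.FaceGen f → MvPolynomial (Fin m) K) (j : B.FaceGen f) :
    B.faceExtend u j = rename f (u j) :=
  Subtype.val_injective.extend_apply _ _ j

theorem faceExtend_zero : B.faceExtend (0 : B.FaceGen f → MvPolynomial (Fin m) K) = 0 := by
  have hzero : rename f ∘ (0 : B.FaceGen f → MvPolynomial (Fin m) K) =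
      (0 : B.FaceGen f → MvPolynomial (Fin n) K) := funext fun _ => map_zero (rename f)
  rw [faceExtend, hzero, Function.extend_zero]

theorem faceRestrict_faceExtend (hf : Function.Injective f)
    (u : B.FaceGen f → MvPolynomial (Fin m) K) : B.faceRestrict hf (B.faceExtend u) = u :=
  funext fun j => by
    rw [faceRestrict, Function.comp_apply, Function.comp_apply, faceExtend_val,
      killCompl_rename_app]

theorem D_mulVec_faceExtend (hf : Function.Injective f) (hface : IsFace a f)
    (u : B.FaceGen f → MvPolynomial (Fin m) K) :
    B.D *ᵥ B.faceExtend u = B.faceExtend (B.faceMatrix hf *ᵥ u) := by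
  have hD : B.D.submatrix Subtype.val Subtype.val = (B.faceMatrix hf).map (rename f) :=
    Matrix.ext fun k j => (B.rename_killCompl_D hf hface k j.2).symm
  have hcol (k : J) (hk : k ∉ Set.range (Subtype.val : B.FaceGen f → J)) (j : B.FaceGen f) :
      B.D k j = 0 := B.D_eq_zero_of_isFace hf hface j.2 fun h => hk ⟨⟨k, h⟩, rfl⟩
  rw [faceExtend, faceExtend,
    mulVec_extend_of_forall_col B.D Subtype.val_injective Subtype.val_injective hcol, hD]
  congr 1
  ext1 k
  exact (RingHom.map_mulVec (rename f : _ →ₐ[K] MvPolynomial (Fin n) K).toRingHom _ u k).symm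

theorem faceRestrict_D_mulVec (hf : Function.Injective f) (v : J → MvPolynomial (Fin n) K) :
    B.faceRestrict hf (B.D *ᵥ v) = B.faceMatrix hf *ᵥ B.faceRestrict hf v := by
  have hmap : killCompl hf ∘ (B.D *ᵥ v) = B.D.map (killCompl hf) *ᵥ (killCompl hf ∘ v) :=
    funext (RingHom.map_mulVec (killCompl hf : _ →ₐ[K] MvPolynomial (Fin m) K).toRingHom B.D v)
  rw [faceRestrict, hmap]
  exact mulVec_comp_of_forall_row _ Subtype.val_injective
    (fun k j hj => B.killCompl_D_eq_zero hf k.2 fun h => hj ⟨⟨j, h⟩, rfl⟩) _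

/-- The restriction of a resolution to a face. -/
def restrict (hf : Function.Injective f) (hface : IsFace a f) :
    TotalResolution K (a ∘ f) (B.FaceGen f) where
  hdeg j := B.hdeg j
  deg j := B.deg j
  D := B.faceMatrix hf
  base := ⟨B.base, by rw [B.deg_base]; exact zero_mem _⟩
  hdeg_eq_zero_iff j := by rw [Subtype.ext_iff, B.hdeg_eq_zero_iff]
  deg_base := B.deg_base
  hdeg_eq_of_ne_zero k j hkj := B.hdeg_eq_of_ne_zero k j fun h => hkj (by
    rw [faceMatrix, Matrix.map_apply, Matrix.submatrix_apply, h, map_zero])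
  deg_eq_of_mem_support k j e he := by
    rw [← gammaDeg_mapDomain]
    refine B.deg_eq_of_mem_support k j _ (mem_support_iff.2 ?_)
    rw [← coeff_killCompl hf]
    exact mem_support_iff.1 he
  coeff_zero k j := by
    rw [faceMatrix, Matrix.map_apply, coeff_killCompl, Finsupp.mapDomain_zero]
    exact B.coeff_zero k j
  D_mul_D := by
    refine Matrix.ext_iff_mulVec.2 fun u => ?_
    rw [← Matrix.mulVec_mulVec, ← B.faceRestrict_faceExtend hf (B.faceMatrix hf *ᵥ _),
      ← B.D_mulVec_faceExtend hf hface, ← B.D_mulVec_faceExtend hf hface, B.D_mulVec_D_mulVec,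
      Matrix.zero_mulVec, ← B.faceExtend_zero (f := f), B.faceRestrict_faceExtend hf]
  D_base_mem j := by
    rw [← rename_mem_toricIdeal_iff]
    exact (B.rename_killCompl_D hf hface B.base j.2).symm ▸ B.D_base_mem j
  exact u hu hbase := by
    rw [← rename_mem_toricIdeal_iff, ← faceExtend_val] at hbase
    obtain ⟨w, hw⟩ := B.exact (B.faceExtend u)
      (by rw [B.D_mulVec_faceExtend hf hface, hu, faceExtend_zero]) hbase
    exact ⟨B.faceRestrict hf w, by
      rw [← B.faceRestrict_D_mulVec, hw, B.faceRestrict_faceExtend]⟩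

theorem StronglyIndispensable.restrict {B : TotalResolution K a J}
    (hB : B.StronglyIndispensable) (hf : Function.Injective f) (hface : IsFace a f) :
    (B.restrict hf hface).StronglyIndispensable := by
  rintro j j' hdeg ⟨γ, hγ, hle⟩
  exact Subtype.ext (hB j j' hdeg ⟨γ, affSemigroup_comp_le hγ, hle⟩)

end TotalResolution

end Face

section Kunneth

variable {K V W : Type*} [Field K] [AddCommGroup V] [Module K V] [AddCommGroup W] [Module K W]

/-- A differential `d` whose cycles are the direct sum of its boundaries and of the range of the
projector `σ`; thus `σ` identifies the homology of `(V, d)` with the range of `σ`. -/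
structure IsAcyclicModulo (d σ : Module.End K V) : Prop where
  diff_mul_diff : d * d = 0
  diff_mul_proj : d * σ = 0
  proj_mul_diff : σ * d = 0
  proj_mul_proj : σ * σ = σ
  exact : ∀ v, d v = 0 → σ v = 0 → ∃ w, d w = v

theorem exists_mul_mul_self_eq (d : Module.End K V) : ∃ s : Module.End K V, d * s * d = d := by
  obtain ⟨s, hs⟩ := d.rangeRestrict.exists_rightInverse_of_surjective d.range_rangeRestrict
  obtain ⟨s', hs'⟩ := s.exists_extend
  refine ⟨s', LinearMap.ext fun v => ?_⟩
  have hextend : s' (d v) = s (d.rangeRestrict v) := LinearMap.congr_fun hs' (d.rangeRestrict v)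
  change d (s' (d v)) = d v
  rw [hextend]
  exact congrArg Subtype.val (LinearMap.congr_fun hs (d.rangeRestrict v))

theorem IsAcyclicModulo.exists_homotopy {d σ : Module.End K V} (hd : IsAcyclicModulo d σ) :
    ∃ h : Module.End K V, d * h + h * d = 1 - σ := by
  obtain ⟨s₀, hs₀⟩ := exists_mul_mul_self_eq d
  obtain ⟨s, hs, hσs⟩ : ∃ s : Module.End K V, d * s * d = d ∧ σ * s = 0 :=
    ⟨(1 - σ) * s₀, by rw [sub_mul, one_mul, mul_sub, ← mul_assoc, hd.diff_mul_proj, zero_mul,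
      sub_zero, hs₀], by rw [← mul_assoc, mul_sub, mul_one, hd.proj_mul_proj, sub_self, zero_mul]⟩
  let q : Module.End K V := 1 - σ - s * d
  have hdq : d * q = 0 := by
    simp only [q, mul_sub, mul_one, hd.diff_mul_proj, ← mul_assoc, hs, sub_zero, sub_self]
  have hσq : σ * q = 0 := by
    simp only [q, mul_sub, mul_one, hd.proj_mul_proj, ← mul_assoc, hσs, zero_mul, sub_self]
  have hqd : q * d = d := by
    simp only [q, sub_mul, one_mul, hd.proj_mul_diff, mul_assoc, hd.diff_mul_diff, mul_zero,
      sub_zero]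
  have hdsq : d * (s * q) = q := LinearMap.ext fun v => by
    obtain ⟨w, hw⟩ := hd.exact (q v) (LinearMap.congr_fun hdq v) (LinearMap.congr_fun hσq v)
    change d (s (q v)) = q v
    rw [← hw]
    exact LinearMap.congr_fun hs w
  exact ⟨s * q, by rw [hdsq, mul_assoc, hqd, sub_add_cancel]⟩

/-- A homotopy between `1` and a projector, up to an operator `n` of square zero, still proves
acyclicity: `1 + n` is invertible on the cycles, with inverse `1 - n`. -/
theorem exists_apply_eq_of_homotopy {d σ h n : Module.End K V} (hdd : d * d = 0)
    (hdσ : d * σ = 0) (hσd : σ * d = 0) (hnn : n * n = 0) (hσn : σ * n = 0)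
    (hhom : d * h + h * d = 1 - σ + n) {v : V} (hdv : d v = 0) (hσv : σ v = 0) :
    ∃ w, d w = v := by
  have hdn : d * n = n * d := by
    have hn : n = d * h + h * d - 1 + σ := by rw [hhom]; abel
    rw [hn]
    simp only [mul_add, add_mul, mul_sub, sub_mul, hdσ, hσd, ← mul_assoc, hdd, zero_mul]
    simp only [mul_assoc, hdd, mul_zero, mul_one, one_mul, zero_add, add_zero]
  have hcycle : ∀ u, d u = 0 → σ u = 0 → d (h u) = u + n u := fun u hdu hσu => by
    simpa [hdu, hσu] using LinearMap.congr_fun hhom u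
  have hdnv : d (n v) = 0 := (LinearMap.congr_fun hdn v).trans (by simp [hdv])
  have hnnv : n (n v) = 0 := LinearMap.congr_fun hnn v
  refine ⟨h (v - n v), ?_⟩
  rw [map_sub, map_sub, hcycle v hdv hσv, hcycle (n v) hdnv (LinearMap.congr_fun hσn v), hnnv,
    add_zero, add_sub_cancel_right]

open scoped RingTheory.LinearMap

theorem tensor_homotopy {d₁ σ₁ τ h₁ : Module.End K V} {d₂ σ₂ h₂ : Module.End K W}
    (hdσ : d₁ * σ₁ = 0) (hσd : σ₁ * d₁ = 0) (hτσ : τ * σ₁ = σ₁) (hστ : σ₁ * τ = σ₁)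
    (hh₁ : d₁ * h₁ + h₁ * d₁ = 1 - σ₁) (hh₂ : d₂ * h₂ + h₂ * d₂ = 1 - σ₂) :
    ((d₁ ⊗ₘ 1) + (τ ⊗ₘ d₂)) * ((h₁ ⊗ₘ 1) + (σ₁ ⊗ₘ h₂)) +
        ((h₁ ⊗ₘ 1) + (σ₁ ⊗ₘ h₂)) * ((d₁ ⊗ₘ 1) + (τ ⊗ₘ d₂)) =
      1 - (σ₁ ⊗ₘ σ₂) + ((τ * h₁ + h₁ * τ) ⊗ₘ d₂) := by
  have hleft : ((d₁ * h₁) ⊗ₘ (1 : Module.End K W)) + ((h₁ * d₁) ⊗ₘ 1) = 1 - (σ₁ ⊗ₘ 1) := by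
    rw [← TensorProduct.map_add_left, hh₁, eq_sub_iff_add_eq, ← TensorProduct.map_add_left,
      sub_add_cancel, TensorProduct.map_one]
  have hright : (σ₁ ⊗ₘ (d₂ * h₂)) + (σ₁ ⊗ₘ (h₂ * d₂)) = (σ₁ ⊗ₘ 1) - (σ₁ ⊗ₘ σ₂) := by
    rw [← TensorProduct.map_add_right, hh₂, eq_sub_iff_add_eq, ← TensorProduct.map_add_right,
      sub_add_cancel]
  simp only [mul_add, add_mul, ← TensorProduct.map_mul, hdσ, hσd, hτσ, hστ, one_mul, mul_one,
    TensorProduct.map_zero_left, TensorProduct.map_add_left]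
  rw [← sub_add_sub_cancel _ (σ₁ ⊗ₘ 1) (σ₁ ⊗ₘ σ₂), ← hleft, ← hright]
  abel

/-- The Künneth formula, for a sign operator `τ` on the first factor. -/
theorem IsAcyclicModulo.tensor {d₁ σ₁ τ : Module.End K V} {d₂ σ₂ : Module.End K W}
    (hd₁ : IsAcyclicModulo d₁ σ₁) (hd₂ : IsAcyclicModulo d₂ σ₂)
    (hτd : τ * d₁ = -(d₁ * τ)) (hτσ : τ * σ₁ = σ₁) (hστ : σ₁ * τ = σ₁) :
    IsAcyclicModulo ((d₁ ⊗ₘ 1) + (τ ⊗ₘ d₂)) (σ₁ ⊗ₘ σ₂) := by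
  have hdd : ((d₁ ⊗ₘ 1) + (τ ⊗ₘ d₂)) * ((d₁ ⊗ₘ 1) + (τ ⊗ₘ d₂)) = 0 := by
    simp only [mul_add, add_mul, ← TensorProduct.map_mul, hd₁.diff_mul_diff,
      hd₂.diff_mul_diff, one_mul, mul_one, TensorProduct.map_zero_left,
      TensorProduct.map_zero_right, zero_add, add_zero]
    rw [← TensorProduct.map_add_left, hτd, neg_add_cancel, TensorProduct.map_zero_left]
  have hdσ : ((d₁ ⊗ₘ 1) + (τ ⊗ₘ d₂)) * (σ₁ ⊗ₘ σ₂) = 0 := by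
    simp only [add_mul, ← TensorProduct.map_mul, hd₁.diff_mul_proj, hd₂.diff_mul_proj,
      TensorProduct.map_zero_left, TensorProduct.map_zero_right, add_zero]
  have hσd : (σ₁ ⊗ₘ σ₂) * ((d₁ ⊗ₘ 1) + (τ ⊗ₘ d₂)) = 0 := by
    simp only [mul_add, ← TensorProduct.map_mul, hd₁.proj_mul_diff, hd₂.proj_mul_diff,
      TensorProduct.map_zero_left, TensorProduct.map_zero_right, add_zero]
  refine ⟨hdd, hdσ, hσd, ?_, ?_⟩
  · rw [← TensorProduct.map_mul, hd₁.proj_mul_proj, hd₂.proj_mul_proj]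
  obtain ⟨h₁, hh₁⟩ := hd₁.exists_homotopy
  obtain ⟨h₂, hh₂⟩ := hd₂.exists_homotopy
  have hhom := tensor_homotopy hd₁.diff_mul_proj hd₁.proj_mul_diff hτσ hστ hh₁ hh₂
  refine fun t hdt hσt => exists_apply_eq_of_homotopy hdd hdσ hσd ?_ ?_ hhom hdt hσt
  · rw [← TensorProduct.map_mul, hd₂.diff_mul_diff, TensorProduct.map_zero_right]
  · rw [← TensorProduct.map_mul, hd₂.proj_mul_diff, TensorProduct.map_zero_right]

end Kunneth

section Operators

open scoped Matrix

/-- The `K`-linear endomorphism of a free module over a polynomial ring given by a matrix. -/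
def mulVecEnd {K σ J : Type*} [Field K] [Fintype J] (M : Matrix J J (MvPolynomial σ K)) :
    Module.End K (J → MvPolynomial σ K) :=
  M.mulVecLin.restrictScalars K

@[simp]
theorem mulVecEnd_apply {K σ J : Type*} [Field K] [Fintype J] (M : Matrix J J (MvPolynomial σ K))
    (v : J → MvPolynomial σ K) : mulVecEnd M v = M *ᵥ v := rfl

namespace TotalResolution

variable {K : Type*} [Field K] {n d : ℕ} {a : Fin n → Fin d → ℕ} {J : Type*} [Fintype J]
  (B : TotalResolution K a J)

open Classical in
/-- The projector that puts the base coordinate in normal form and discards all others. It is a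
`K`-linear projector onto a copy of `K[Γ]`, the homology of the resolution. -/
def baseProj : Module.End K (J → MvPolynomial (Fin n) K) :=
  LinearMap.single K (fun _ => MvPolynomial (Fin n) K) B.base ∘ₗ normalForm K a ∘ₗ
    LinearMap.proj B.base

open Classical in
theorem baseProj_apply (v : J → MvPolynomial (Fin n) K) :
    B.baseProj v = Pi.single B.base (normalForm K a (v B.base)) := rfl

theorem baseProj_eq_zero_iff {v : J → MvPolynomial (Fin n) K} :
    B.baseProj v = 0 ↔ v B.base ∈ toricIdeal K a := by
  classical
  rw [baseProj_apply, Pi.single_eq_zero_iff, normalForm_eq_zero_iff]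

theorem isAcyclicModulo : IsAcyclicModulo (mulVecEnd B.D) B.baseProj where
  diff_mul_diff := LinearMap.ext B.D_mulVec_D_mulVec
  diff_mul_proj := LinearMap.ext fun v => by
    classical
    rw [Module.End.mul_apply, baseProj_apply, mulVecEnd_apply, Matrix.mulVec_single]
    exact funext fun k => mul_eq_zero_of_left (B.D_apply_base k) _
  proj_mul_diff := LinearMap.ext fun v => B.baseProj_eq_zero_iff.2 (B.D_mulVec_base_mem v)
  proj_mul_proj := LinearMap.ext fun v => by
    classical
    rw [Module.End.mul_apply, baseProj_apply, baseProj_apply, Pi.single_eq_same,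
      normalForm_normalForm]
  exact v hv hbase := B.exact v hv (B.baseProj_eq_zero_iff.1 hbase)

open Classical in
/-- The sign `(-1)^i` in homological degree `i`. -/
def signMatrix : Matrix J J (MvPolynomial (Fin n) K) :=
  Matrix.diagonal fun j => (-1) ^ B.hdeg j

theorem signMatrix_mulVec (v : J → MvPolynomial (Fin n) K) (j : J) :
    (B.signMatrix *ᵥ v) j = (-1) ^ B.hdeg j * v j := by
  classical
  rw [signMatrix, Matrix.mulVec_diagonal]

theorem sign_mul_D : mulVecEnd B.signMatrix * mulVecEnd B.D =
    -(mulVecEnd B.D * mulVecEnd B.signMatrix) := by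
  refine LinearMap.ext fun v => funext fun k => ?_
  change (B.signMatrix *ᵥ (B.D *ᵥ v)) k = -(B.D *ᵥ (B.signMatrix *ᵥ v)) k
  rw [signMatrix_mulVec, Matrix.mulVec, Matrix.mulVec, dotProduct, dotProduct, Finset.mul_sum,
    ← Finset.sum_neg_distrib]
  refine Finset.sum_congr rfl fun j _ => ?_
  rw [signMatrix_mulVec]
  by_cases hkj : B.D k j = 0
  · rw [hkj, zero_mul, zero_mul, mul_zero, neg_zero]
  · rw [B.hdeg_eq_of_ne_zero k j hkj]
    ring

theorem sign_mul_baseProj : mulVecEnd B.signMatrix * B.baseProj = B.baseProj := by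
  classical
  refine LinearMap.ext fun v => funext fun j => ?_
  rw [Module.End.mul_apply, mulVecEnd_apply, signMatrix_mulVec, baseProj_apply]
  by_cases hj : j = B.base
  · rw [hj, B.hdeg_base, pow_zero, one_mul]
  · rw [Pi.single_eq_of_ne hj, mul_zero]

theorem baseProj_mul_sign : B.baseProj * mulVecEnd B.signMatrix = B.baseProj :=
  LinearMap.ext fun v => by
    rw [Module.End.mul_apply, baseProj_apply, mulVecEnd_apply, signMatrix_mulVec, B.hdeg_base,
      pow_zero, one_mul, baseProj_apply]

end TotalResolution

end Operators

section JoinVariables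

variable {K : Type*} [Field K] {m₁ m₂ : ℕ}

/-- The inclusion of the first polynomial ring into that of the join. -/
abbrev inl (K : Type*) [Field K] (m₁ m₂ : ℕ) :
    MvPolynomial (Fin m₁) K →ₐ[K] MvPolynomial (Fin (m₁ + m₂)) K :=
  rename (Fin.castAdd m₂)

/-- The inclusion of the second polynomial ring into that of the join. -/
abbrev inr (K : Type*) [Field K] (m₁ m₂ : ℕ) :
    MvPolynomial (Fin m₂) K →ₐ[K] MvPolynomial (Fin (m₁ + m₂)) K :=
  rename (Fin.natAdd m₁)

/-- Exponents in the variables of the join as pairs of exponents in the two sets of variables. -/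
def joinExponent (m₁ m₂ : ℕ) : (Fin m₁ →₀ ℕ) × (Fin m₂ →₀ ℕ) ≃+ (Fin (m₁ + m₂) →₀ ℕ) :=
  Finsupp.sumFinsuppAddEquivProdFinsupp.symm.trans (Finsupp.domCongr finSumFinEquiv)

theorem joinExponent_apply (e : Fin m₁ →₀ ℕ) (f : Fin m₂ →₀ ℕ) :
    joinExponent m₁ m₂ (e, f) = e.mapDomain (Fin.castAdd m₂) + f.mapDomain (Fin.natAdd m₁) := by
  change (Finsupp.sumElim e f).equivMapDomain finSumFinEquiv = _
  rw [Finsupp.equivMapDomain_eq_mapDomain, Finsupp.sumElim_eq_add, Finsupp.mapDomain_add]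
  rw [← Finsupp.mapDomain_comp, ← Finsupp.mapDomain_comp]
  rfl

theorem inl_monomial_mul_inr_monomial (e : Fin m₁ →₀ ℕ) (f : Fin m₂ →₀ ℕ) (r s : K) :
    inl K m₁ m₂ (monomial e r) * inr K m₁ m₂ (monomial f s) =
      monomial (joinExponent m₁ m₂ (e, f)) (r * s) := by
  rw [rename_monomial, rename_monomial, monomial_mul, joinExponent_apply]

/-- Applying `c₁` and `c₂` to the two parts of an exponent in the variables of the join. -/
def joinExponentMap (c₁ : (Fin m₁ →₀ ℕ) → Fin m₁ →₀ ℕ) (c₂ : (Fin m₂ →₀ ℕ) → Fin m₂ →₀ ℕ) :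
    (Fin (m₁ + m₂) →₀ ℕ) → Fin (m₁ + m₂) →₀ ℕ :=
  joinExponent m₁ m₂ ∘ Prod.map c₁ c₂ ∘ (joinExponent m₁ m₂).symm

theorem monomialMap_joinExponentMap (c₁ : (Fin m₁ →₀ ℕ) → Fin m₁ →₀ ℕ)
    (c₂ : (Fin m₂ →₀ ℕ) → Fin m₂ →₀ ℕ) (p : MvPolynomial (Fin m₁) K)
    (q : MvPolynomial (Fin m₂) K) :
    monomialMap (joinExponentMap c₁ c₂) (inl K m₁ m₂ p * inr K m₁ m₂ q) =
      inl K m₁ m₂ (monomialMap c₁ p) * inr K m₁ m₂ (monomialMap c₂ q) := by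
  induction p using MvPolynomial.induction_on' with
  | add p p' hp hp' => simp only [map_add, add_mul, hp, hp']
  | monomial e r =>
    induction q using MvPolynomial.induction_on' with
    | add q q' hq hq' => simp only [map_add, mul_add, hq, hq']
    | monomial f s =>
      simp only [inl_monomial_mul_inr_monomial, monomialMap_monomial, joinExponentMap,
        Function.comp_apply, AddEquiv.symm_apply_apply, Prod.map_apply]

end JoinVariables

section TensorEquiv

open scoped TensorProduct Matrix Kronecker RingTheory.LinearMap

variable {K : Type*} [Field K] {m₁ m₂ : ℕ} {J₁ J₂ : Type*}

/-- Pairs of monomial basis vectors of the two free modules correspond to monomial basis vectors of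
the free module of the join. -/
def joinBasisEquiv (m₁ m₂ : ℕ) (J₁ J₂ : Type*) :
    (Σ _ : J₁, Fin m₁ →₀ ℕ) × (Σ _ : J₂, Fin m₂ →₀ ℕ) ≃ Σ _ : J₁ × J₂, Fin (m₁ + m₂) →₀ ℕ :=
  ((Equiv.sigmaEquivProd _ _).prodCongr (Equiv.sigmaEquivProd _ _)).trans <|
    (Equiv.prodProdProdComm _ _ _ _).trans <|
      ((Equiv.refl _).prodCongr (joinExponent m₁ m₂).toEquiv).trans (Equiv.sigmaEquivProd _ _).symm

theorem joinBasisEquiv_apply (j₁ : J₁) (j₂ : J₂) (e : Fin m₁ →₀ ℕ) (f : Fin m₂ →₀ ℕ) :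
    joinBasisEquiv m₁ m₂ J₁ J₂ (⟨j₁, e⟩, ⟨j₂, f⟩) = ⟨(j₁, j₂), joinExponent m₁ m₂ (e, f)⟩ := rfl

variable [Fintype J₁] [Fintype J₂]

/-- Over `K`, the tensor product of free modules over two polynomial rings is the free module over
the polynomial ring of the join whose basis is the product of the two bases. -/
def tensorEquiv (K : Type*) [Field K] (m₁ m₂ : ℕ) (J₁ J₂ : Type*) [Fintype J₁] [Fintype J₂] :
    (J₁ → MvPolynomial (Fin m₁) K) ⊗[K] (J₂ → MvPolynomial (Fin m₂) K) ≃ₗ[K]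
      (J₁ × J₂ → MvPolynomial (Fin (m₁ + m₂)) K) :=
  ((Pi.basis fun _ : J₁ => basisMonomials (Fin m₁) K).tensorProduct
      (Pi.basis fun _ : J₂ => basisMonomials (Fin m₂) K)).equiv
    (Pi.basis fun _ : J₁ × J₂ => basisMonomials (Fin (m₁ + m₂)) K) (joinBasisEquiv m₁ m₂ J₁ J₂)

open Classical in
theorem tensorEquiv_single_tmul_single (j₁ : J₁) (j₂ : J₂) (e : Fin m₁ →₀ ℕ)
    (f : Fin m₂ →₀ ℕ) :
    tensorEquiv K m₁ m₂ J₁ J₂ (Pi.single j₁ (monomial e 1) ⊗ₜ Pi.single j₂ (monomial f 1)) =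
      Pi.single (j₁, j₂) (monomial (joinExponent m₁ m₂ (e, f)) 1) := by
  have hequiv := ((Pi.basis fun _ : J₁ => basisMonomials (Fin m₁) K).tensorProduct
      (Pi.basis fun _ : J₂ => basisMonomials (Fin m₂) K)).equiv_apply (⟨j₁, e⟩, ⟨j₂, f⟩)
    (Pi.basis fun _ : J₁ × J₂ => basisMonomials (Fin (m₁ + m₂)) K) (joinBasisEquiv m₁ m₂ J₁ J₂)
  simpa only [tensorEquiv, Module.Basis.tensorProduct_apply, joinBasisEquiv_apply, Pi.basis_apply,
    coe_basisMonomials] using hequiv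

theorem tensorEquiv_tmul (u : J₁ → MvPolynomial (Fin m₁) K) (v : J₂ → MvPolynomial (Fin m₂) K)
    (j : J₁ × J₂) :
    tensorEquiv K m₁ m₂ J₁ J₂ (u ⊗ₜ v) j = inl K m₁ m₂ (u j.1) * inr K m₁ m₂ (v j.2) := by
  classical
  let β : (J₁ → MvPolynomial (Fin m₁) K) →ₗ[K] (J₂ → MvPolynomial (Fin m₂) K) →ₗ[K]
      (J₁ × J₂ → MvPolynomial (Fin (m₁ + m₂)) K) :=
    LinearMap.mk₂ K (fun u v j => inl K m₁ m₂ (u j.1) * inr K m₁ m₂ (v j.2))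
      (fun u u' v => by ext1 j; simp only [Pi.add_apply, map_add, add_mul])
      (fun c u v => by ext1 j; simp only [Pi.smul_apply, map_smul, smul_mul_assoc])
      (fun u v v' => by ext1 j; simp only [Pi.add_apply, map_add, mul_add])
      (fun c u v => by ext1 j; simp only [Pi.smul_apply, map_smul, mul_smul_comm])
  suffices h : (TensorProduct.mk K _ _).compr₂ (tensorEquiv K m₁ m₂ J₁ J₂).toLinearMap = β from
    congrFun (LinearMap.congr_fun₂ h u v) j
  refine (Pi.basis fun _ : J₁ => basisMonomials (Fin m₁) K).ext fun ⟨j₁, e⟩ =>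
    (Pi.basis fun _ : J₂ => basisMonomials (Fin m₂) K).ext fun ⟨j₂, f⟩ => ?_
  simp only [Pi.basis_apply, coe_basisMonomials]
  refine (tensorEquiv_single_tmul_single j₁ j₂ e f).trans (funext fun j => ?_)
  obtain ⟨k₁, k₂⟩ := j
  change _ = inl K m₁ m₂ _ * inr K m₁ m₂ _
  by_cases h₁ : k₁ = j₁ <;> by_cases h₂ : k₂ = j₂ <;>
    simp [h₁, h₂, inl_monomial_mul_inr_monomial]

theorem kronecker_mulVec_tensorEquiv (M₁ : Matrix J₁ J₁ (MvPolynomial (Fin m₁) K))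
    (M₂ : Matrix J₂ J₂ (MvPolynomial (Fin m₂) K)) (t) :
    ((M₁.map (inl K m₁ m₂)) ⊗ₖ (M₂.map (inr K m₁ m₂))) *ᵥ tensorEquiv K m₁ m₂ J₁ J₂ t =
      tensorEquiv K m₁ m₂ J₁ J₂ ((mulVecEnd M₁ ⊗ₘ mulVecEnd M₂) t) := by
  induction t using TensorProduct.induction_on with
  | zero => simp only [map_zero, Matrix.mulVec_zero]
  | add t t' ht ht' => simp only [map_add, Matrix.mulVec_add, ht, ht']
  | tmul u v =>
    funext j
    simp only [TensorProduct.map_tmul, tensorEquiv_tmul, mulVecEnd_apply, Matrix.mulVec,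
      dotProduct, Fintype.sum_prod_type, map_sum, map_mul, Finset.sum_mul_sum]
    exact Finset.sum_congr rfl fun _ _ => Finset.sum_congr rfl fun _ _ => mul_mul_mul_comm _ _ _ _

end TensorEquiv

section JoinDegrees

variable {K : Type*} [Field K] {m₁ m₂ d : ℕ} {g₁ : Fin m₁ → Fin d → ℕ} {g₂ : Fin m₂ → Fin d → ℕ}

theorem support_mapDomain_subset_range {σ τ : Type*} (f : σ → τ) (e : σ →₀ ℕ) :
    ↑(e.mapDomain f).support ⊆ Set.range f := by
  classical
  intro i hi
  obtain ⟨k, -, rfl⟩ := Finset.mem_image.1 (Finsupp.mapDomain_support hi)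
  exact ⟨k, rfl⟩

theorem gammaDeg_of_mem_support_rename {m n : ℕ} {a : Fin n → Fin d → ℕ} {f : Fin m → Fin n}
    {p : MvPolynomial (Fin m) K} {P : (Fin d → ℕ) → Prop}
    (hp : ∀ e ∈ p.support, P (gammaDeg (a ∘ f) e)) {e : Fin n →₀ ℕ}
    (he : e ∈ (rename f p).support) : P (gammaDeg a e) := by
  obtain ⟨e', rfl, he'⟩ := coeff_rename_ne_zero f p e (mem_support_iff.1 he)
  rw [gammaDeg_mapDomain]
  exact hp e' (mem_support_iff.2 he')

theorem append_comp_castAdd : Fin.append g₁ g₂ ∘ Fin.castAdd m₂ = g₁ :=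
  funext (Fin.append_left g₁ g₂)

theorem append_comp_natAdd : Fin.append g₁ g₂ ∘ Fin.natAdd m₁ = g₂ :=
  funext (Fin.append_right g₁ g₂)

theorem gammaDeg_append_joinExponent (e : Fin m₁ →₀ ℕ) (f : Fin m₂ →₀ ℕ) :
    gammaDeg (Fin.append g₁ g₂) (joinExponent m₁ m₂ (e, f)) = gammaDeg g₁ e + gammaDeg g₂ f := by
  rw [joinExponent_apply, gammaDeg_add, gammaDeg_mapDomain, gammaDeg_mapDomain,
    append_comp_castAdd, append_comp_natAdd]

theorem affSemigroup_append :
    affSemigroup (Fin.append g₁ g₂) = affSemigroup g₁ ⊔ affSemigroup g₂ := by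
  have hrange : Set.range (Fin.append g₁ g₂) = Set.range g₁ ∪ Set.range g₂ := by
    rw [← Set.Sum.elim_range, ← Fin.append_comp_sumElim]
    exact (finSumFinEquiv.surjective.range_comp _).symm
  rw [affSemigroup, hrange, AddSubmonoid.closure_union, affSemigroup, affSemigroup]

variable (hdir : IsDirect (affSemigroup g₁) (affSemigroup g₂))
include hdir

theorem IsDirect.gammaLE_append {u₁ v₁ u₂ v₂ : Fin d → ℕ} (hu₁ : u₁ ∈ affSemigroup g₁)
    (hv₁ : v₁ ∈ affSemigroup g₁) (hu₂ : u₂ ∈ affSemigroup g₂) (hv₂ : v₂ ∈ affSemigroup g₂)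
    (hle : GammaLE (Fin.append g₁ g₂) (u₁ + u₂) (v₁ + v₂)) :
    GammaLE g₁ u₁ v₁ ∧ GammaLE g₂ u₂ v₂ := by
  obtain ⟨γ, hγ, hsum⟩ := hle
  rw [affSemigroup_append, AddSubmonoid.mem_sup] at hγ
  obtain ⟨γ₁, hγ₁, γ₂, hγ₂, rfl⟩ := hγ
  rw [add_add_add_comm] at hsum
  obtain ⟨h₁, h₂⟩ := hdir hv₁ (add_mem hγ₁ hu₁) hv₂ (add_mem hγ₂ hu₂) hsum
  exact ⟨⟨γ₁, hγ₁, h₁⟩, ⟨γ₂, hγ₂, h₂⟩⟩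

theorem IsDirect.isFace_castAdd (hg₂ : ∀ i, g₂ i ≠ 0) :
    IsFace (Fin.append g₁ g₂) (Fin.castAdd m₂) := by
  intro e he
  obtain ⟨⟨e₁, e₂⟩, rfl⟩ := (joinExponent m₁ m₂).surjective e
  rw [append_comp_castAdd, gammaDeg_append_joinExponent] at he
  obtain ⟨-, hzero⟩ := hdir (gammaDeg_mem_affSemigroup g₁ e₁) he (gammaDeg_mem_affSemigroup g₂ e₂)
    (zero_mem _) (add_zero _).symm
  rw [(gammaDeg_eq_zero_iff hg₂).1 hzero, joinExponent_apply, Finsupp.mapDomain_zero, add_zero]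
  exact support_mapDomain_subset_range _ _

theorem IsDirect.isFace_natAdd (hg₁ : ∀ i, g₁ i ≠ 0) :
    IsFace (Fin.append g₁ g₂) (Fin.natAdd m₁) := by
  intro e he
  obtain ⟨⟨e₁, e₂⟩, rfl⟩ := (joinExponent m₁ m₂).surjective e
  rw [append_comp_natAdd, gammaDeg_append_joinExponent] at he
  obtain ⟨hzero, -⟩ := hdir (gammaDeg_mem_affSemigroup g₁ e₁) (zero_mem _)
    (gammaDeg_mem_affSemigroup g₂ e₂) he (zero_add _).symm
  rw [(gammaDeg_eq_zero_iff hg₁).1 hzero, joinExponent_apply, Finsupp.mapDomain_zero, zero_add]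
  exact support_mapDomain_subset_range _ _

theorem IsDirect.joinExponentMap_factorsThrough :
    Function.FactorsThrough (joinExponentMap (normalExponent g₁) (normalExponent g₂))
      (gammaDeg (Fin.append g₁ g₂)) := by
  intro e f hef
  obtain ⟨⟨e₁, e₂⟩, rfl⟩ := (joinExponent m₁ m₂).surjective e
  obtain ⟨⟨f₁, f₂⟩, rfl⟩ := (joinExponent m₁ m₂).surjective f
  rw [gammaDeg_append_joinExponent, gammaDeg_append_joinExponent] at hef
  obtain ⟨h₁, h₂⟩ := hdir (gammaDeg_mem_affSemigroup g₁ e₁) (gammaDeg_mem_affSemigroup g₁ f₁)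
    (gammaDeg_mem_affSemigroup g₂ e₂) (gammaDeg_mem_affSemigroup g₂ f₂) hef
  simp only [joinExponentMap, Function.comp_apply, AddEquiv.symm_apply_apply, Prod.map_apply,
    normalExponent_factorsThrough g₁ h₁, normalExponent_factorsThrough g₂ h₂]

end JoinDegrees

section Join

open scoped TensorProduct Matrix Kronecker RingTheory.LinearMap

variable {K : Type*} [Field K] {m₁ m₂ d : ℕ} {g₁ : Fin m₁ → Fin d → ℕ} {g₂ : Fin m₂ → Fin d → ℕ}
  {J₁ J₂ : Type*} [Fintype J₁] [Fintype J₂]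

namespace TotalResolution

variable (B₁ : TotalResolution K g₁ J₁) (B₂ : TotalResolution K g₂ J₂)

open Classical in
/-- The differential `D₁ ⊗ 1 ± 1 ⊗ D₂` of the tensor product of two resolutions. -/
def joinMatrix : Matrix (J₁ × J₂) (J₁ × J₂) (MvPolynomial (Fin (m₁ + m₂)) K) :=
  B₁.D.map (inl K m₁ m₂) ⊗ₖ (1 : Matrix J₂ J₂ _).map (inr K m₁ m₂) +
    B₁.signMatrix.map (inl K m₁ m₂) ⊗ₖ B₂.D.map (inr K m₁ m₂)

/-- The differential of the tensor product of two resolutions, before identifying it with a free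
module over the polynomial ring of the join. -/
def tensorDiff :
    Module.End K ((J₁ → MvPolynomial (Fin m₁) K) ⊗[K] (J₂ → MvPolynomial (Fin m₂) K)) :=
  (mulVecEnd B₁.D ⊗ₘ 1) + (mulVecEnd B₁.signMatrix ⊗ₘ mulVecEnd B₂.D)

theorem isAcyclicModulo_tensorDiff :
    IsAcyclicModulo (tensorDiff B₁ B₂) (B₁.baseProj ⊗ₘ B₂.baseProj) :=
  B₁.isAcyclicModulo.tensor B₂.isAcyclicModulo B₁.sign_mul_D B₁.sign_mul_baseProj
    B₁.baseProj_mul_sign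

theorem joinMatrix_mulVec_tensorEquiv (t) :
    joinMatrix B₁ B₂ *ᵥ tensorEquiv K m₁ m₂ J₁ J₂ t =
      tensorEquiv K m₁ m₂ J₁ J₂ (tensorDiff B₁ B₂ t) := by
  classical
  have hone : mulVecEnd (1 : Matrix J₂ J₂ (MvPolynomial (Fin m₂) K)) = 1 :=
    LinearMap.ext Matrix.one_mulVec
  rw [joinMatrix, Matrix.add_mulVec, kronecker_mulVec_tensorEquiv, kronecker_mulVec_tensorEquiv,
    hone, tensorDiff, LinearMap.add_apply, map_add]

theorem joinMatrix_mul_joinMatrix : joinMatrix B₁ B₂ * joinMatrix B₁ B₂ = 0 := by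
  refine Matrix.ext_iff_mulVec.2 fun v => ?_
  obtain ⟨t, rfl⟩ := (tensorEquiv K m₁ m₂ J₁ J₂).surjective v
  rw [← Matrix.mulVec_mulVec, joinMatrix_mulVec_tensorEquiv, joinMatrix_mulVec_tensorEquiv,
    ← Module.End.mul_apply, (isAcyclicModulo_tensorDiff B₁ B₂).diff_mul_diff,
    LinearMap.zero_apply, map_zero, Matrix.zero_mulVec]

theorem joinMatrix_apply_cases (k j : J₁ × J₂) :
    (k.2 = j.2 ∧ joinMatrix B₁ B₂ k j = inl K m₁ m₂ (B₁.D k.1 j.1)) ∨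
      (k.1 = j.1 ∧ ∃ c : K, joinMatrix B₁ B₂ k j = c • inr K m₁ m₂ (B₂.D k.2 j.2)) ∨
        joinMatrix B₁ B₂ k j = 0 := by
  classical
  obtain ⟨k₁, k₂⟩ := k
  obtain ⟨j₁, j₂⟩ := j
  have hentry : joinMatrix B₁ B₂ (k₁, k₂) (j₁, j₂) =
      inl K m₁ m₂ (B₁.D k₁ j₁) * inr K m₁ m₂ ((1 : Matrix J₂ J₂ _) k₂ j₂) +
        inl K m₁ m₂ (B₁.signMatrix k₁ j₁) * inr K m₁ m₂ (B₂.D k₂ j₂) := rfl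
  rw [hentry]
  by_cases h₂ : k₂ = j₂
  · subst h₂
    rw [D_apply_self, Matrix.one_apply_eq, map_zero, mul_zero, add_zero, map_one, mul_one]
    exact Or.inl ⟨rfl, rfl⟩
  rw [Matrix.one_apply_ne h₂, map_zero, mul_zero, zero_add]
  refine Or.inr ?_
  by_cases h₁ : k₁ = j₁
  · subst h₁
    refine Or.inl ⟨rfl, (-1) ^ B₁.hdeg k₁, ?_⟩
    rw [signMatrix, Matrix.diagonal_apply_eq, map_pow, map_neg, map_one, smul_eq_C_mul, map_pow,
      map_neg, map_one]
  · rw [signMatrix, Matrix.diagonal_apply_ne _ h₁, map_zero, zero_mul]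
    exact Or.inr rfl

open Classical in
theorem tensorEquiv_map_baseProj (t) :
    tensorEquiv K m₁ m₂ J₁ J₂ ((B₁.baseProj ⊗ₘ B₂.baseProj) t) =
      Pi.single (B₁.base, B₂.base)
        (monomialMap (joinExponentMap (normalExponent g₁) (normalExponent g₂))
          (tensorEquiv K m₁ m₂ J₁ J₂ t (B₁.base, B₂.base))) := by
  induction t using TensorProduct.induction_on with
  | zero => simp only [map_zero, Pi.zero_apply, Pi.single_zero]
  | add t t' ht ht' => simp only [map_add, Pi.add_apply, Pi.single_add, ht, ht']
  | tmul u v =>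
    funext ⟨j₁, j₂⟩
    rw [TensorProduct.map_tmul, tensorEquiv_tmul, tensorEquiv_tmul, monomialMap_joinExponentMap,
      baseProj_apply, baseProj_apply]
    by_cases h₁ : j₁ = B₁.base <;> by_cases h₂ : j₂ = B₂.base <;> simp [normalForm, h₁, h₂]

theorem exists_joinMatrix_mulVec_eq (hdir : IsDirect (affSemigroup g₁) (affSemigroup g₂))
    {v : J₁ × J₂ → MvPolynomial (Fin (m₁ + m₂)) K} (hv : joinMatrix B₁ B₂ *ᵥ v = 0)
    (hbase : v (B₁.base, B₂.base) ∈ toricIdeal K (Fin.append g₁ g₂)) :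
    ∃ w, joinMatrix B₁ B₂ *ᵥ w = v := by
  classical
  obtain ⟨t, rfl⟩ := (tensorEquiv K m₁ m₂ J₁ J₂).surjective v
  have hcycle : tensorDiff B₁ B₂ t = 0 := by
    rwa [joinMatrix_mulVec_tensorEquiv, map_eq_zero_iff _ (LinearEquiv.injective _)] at hv
  have hproj : (B₁.baseProj ⊗ₘ B₂.baseProj) t = 0 := by
    rw [← map_eq_zero_iff _ (tensorEquiv K m₁ m₂ J₁ J₂).injective, tensorEquiv_map_baseProj,
      monomialMap_eq_zero_of_mem_toricIdeal hdir.joinExponentMap_factorsThrough hbase,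
      Pi.single_zero]
  obtain ⟨w, hw⟩ := (isAcyclicModulo_tensorDiff B₁ B₂).exact t hcycle hproj
  exact ⟨tensorEquiv K m₁ m₂ J₁ J₂ w, by rw [joinMatrix_mulVec_tensorEquiv, hw]⟩

theorem hdeg_of_joinMatrix_ne_zero {k j : J₁ × J₂} (h : joinMatrix B₁ B₂ k j ≠ 0) :
    B₁.hdeg j.1 + B₂.hdeg j.2 = B₁.hdeg k.1 + B₂.hdeg k.2 + 1 := by
  rcases joinMatrix_apply_cases B₁ B₂ k j with ⟨hkj, heq⟩ | ⟨hkj, c, heq⟩ | hzero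
  · rw [heq] at h
    rw [B₁.hdeg_eq_of_ne_zero k.1 j.1 (ne_zero_of_map h), hkj, Nat.add_right_comm]
  · rw [heq] at h
    rw [B₂.hdeg_eq_of_ne_zero k.2 j.2 (ne_zero_of_map (right_ne_zero_of_smul h)), hkj,
      Nat.add_assoc]
  · exact absurd hzero h

theorem deg_of_mem_support_joinMatrix {k j : J₁ × J₂} {e : Fin (m₁ + m₂) →₀ ℕ}
    (he : e ∈ (joinMatrix B₁ B₂ k j).support) :
    B₁.deg j.1 + B₂.deg j.2 =
      gammaDeg (Fin.append g₁ g₂) e + (B₁.deg k.1 + B₂.deg k.2) := by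
  rcases joinMatrix_apply_cases B₁ B₂ k j with ⟨hkj, heq⟩ | ⟨hkj, c, heq⟩ | hzero
  · rw [heq] at he
    rw [← hkj, ← add_assoc]
    refine congrArg (· + B₂.deg k.2)
      (gammaDeg_of_mem_support_rename (P := fun u => B₁.deg j.1 = u + B₁.deg k.1) ?_ he)
    rw [append_comp_castAdd]
    exact B₁.deg_eq_of_mem_support k.1 j.1
  · rw [heq] at he
    rw [← hkj, add_left_comm]
    refine congrArg (B₁.deg k.1 + ·)
      (gammaDeg_of_mem_support_rename (P := fun u => B₂.deg j.2 = u + B₂.deg k.2) ?_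
        (support_smul he))
    rw [append_comp_natAdd]
    exact B₂.deg_eq_of_mem_support k.2 j.2
  · rw [hzero, support_zero] at he
    exact absurd he (Finset.notMem_empty e)

theorem coeff_zero_joinMatrix (k j : J₁ × J₂) : coeff 0 (joinMatrix B₁ B₂ k j) = 0 := by
  rcases joinMatrix_apply_cases B₁ B₂ k j with ⟨-, heq⟩ | ⟨-, c, heq⟩ | hzero
  · rw [heq, ← constantCoeff_eq, constantCoeff_rename, constantCoeff_eq, B₁.coeff_zero]
  · rw [heq, coeff_smul, ← constantCoeff_eq, constantCoeff_rename, constantCoeff_eq,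
      B₂.coeff_zero, smul_zero]
  · rw [hzero, MvPolynomial.coeff_zero]

theorem joinMatrix_base_mem (j : J₁ × J₂) :
    joinMatrix B₁ B₂ (B₁.base, B₂.base) j ∈ toricIdeal K (Fin.append g₁ g₂) := by
  rcases joinMatrix_apply_cases B₁ B₂ (B₁.base, B₂.base) j with ⟨-, heq⟩ | ⟨-, c, heq⟩ | hzero
  · rw [heq, rename_mem_toricIdeal_iff, append_comp_castAdd]
    exact B₁.D_base_mem j.1
  · rw [heq]
    refine Submodule.smul_of_tower_mem _ c ?_
    rw [rename_mem_toricIdeal_iff, append_comp_natAdd]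
    exact B₂.D_base_mem j.2
  · rw [hzero]
    exact zero_mem _

/-- The tensor product over `K` of minimal resolutions of `K[Γ₁]` and `K[Γ₂]`, as a minimal
resolution of the semigroup ring of the join. -/
def join (hdir : IsDirect (affSemigroup g₁) (affSemigroup g₂)) :
    TotalResolution K (Fin.append g₁ g₂) (J₁ × J₂) where
  hdeg j := B₁.hdeg j.1 + B₂.hdeg j.2
  deg j := B₁.deg j.1 + B₂.deg j.2
  D := joinMatrix B₁ B₂
  base := (B₁.base, B₂.base)
  hdeg_eq_zero_iff j := by
    rw [Nat.add_eq_zero_iff, B₁.hdeg_eq_zero_iff, B₂.hdeg_eq_zero_iff, Prod.ext_iff]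
  deg_base := by rw [B₁.deg_base, B₂.deg_base, add_zero]
  hdeg_eq_of_ne_zero _ _ h := hdeg_of_joinMatrix_ne_zero B₁ B₂ h
  deg_eq_of_mem_support _ _ _ he := deg_of_mem_support_joinMatrix B₁ B₂ he
  coeff_zero := coeff_zero_joinMatrix B₁ B₂
  D_mul_D := joinMatrix_mul_joinMatrix B₁ B₂
  D_base_mem := joinMatrix_base_mem B₁ B₂
  exact _ hv hbase := exists_joinMatrix_mulVec_eq B₁ B₂ hdir hv hbase

theorem StronglyIndispensable.join {B₁ : TotalResolution K g₁ J₁} {B₂ : TotalResolution K g₂ J₂}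
    (hB₁ : B₁.StronglyIndispensable) (hB₂ : B₂.StronglyIndispensable)
    (hdir : IsDirect (affSemigroup g₁) (affSemigroup g₂)) :
    (B₁.join B₂ hdir).StronglyIndispensable := by
  intro j j' hsum hle
  obtain ⟨hle₁, hle₂⟩ := hdir.gammaLE_append (B₁.deg_mem_affSemigroup j'.1)
    (B₁.deg_mem_affSemigroup j.1) (B₂.deg_mem_affSemigroup j'.2) (B₂.deg_mem_affSemigroup j.2) hle
  have hhdeg₁ := hB₁.hdeg_le hle₁
  have hhdeg₂ := hB₂.hdeg_le hle₂
  change B₁.hdeg j.1 + B₂.hdeg j.2 = B₁.hdeg j'.1 + B₂.hdeg j'.2 at hsum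
  exact Prod.ext (hB₁ j.1 j'.1 (by omega) hle₁) (hB₂ j.2 j'.2 (by omega) hle₂)

end TotalResolution

end Join

namespace HasSIFR

variable {K : Type*} [Field K] {n d : ℕ} {a : Fin n → Fin d → ℕ}

theorem generator_ne_zero (h : HasSIFR K a) (i : Fin n) : a i ≠ 0 := by
  obtain ⟨_, _, B, -⟩ := hasSIFR_iff_exists_totalResolution.1 h
  exact B.generator_ne_zero i

theorem comp_of_isFace {m : ℕ} {f : Fin m → Fin n} (h : HasSIFR K a)
    (hf : Function.Injective f) (hface : IsFace a f) : HasSIFR K (a ∘ f) := by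
  obtain ⟨_, _, B, hB⟩ := hasSIFR_iff_exists_totalResolution.1 h
  exact hasSIFR_iff_exists_totalResolution.2
    ⟨_, inferInstance, B.restrict hf hface, hB.restrict hf hface⟩

theorem join {m₁ m₂ : ℕ} {g₁ : Fin m₁ → Fin d → ℕ} {g₂ : Fin m₂ → Fin d → ℕ}
    (h₁ : HasSIFR K g₁) (h₂ : HasSIFR K g₂)
    (hdir : IsDirect (affSemigroup g₁) (affSemigroup g₂)) : HasSIFR K (Fin.append g₁ g₂) := by
  obtain ⟨_, _, B₁, hB₁⟩ := hasSIFR_iff_exists_totalResolution.1 h₁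
  obtain ⟨_, _, B₂, hB₂⟩ := hasSIFR_iff_exists_totalResolution.1 h₂
  exact hasSIFR_iff_exists_totalResolution.2
    ⟨_, inferInstance, B₁.join B₂ hdir, hB₁.join hB₂ hdir⟩

end HasSIFR

theorem join_has_SIFR_iff_general {K : Type*} [Field K] {m₁ m₂ d : ℕ}
    {g₁ : Fin m₁ → Fin d → ℕ} {g₂ : Fin m₂ → Fin d → ℕ}
    (hdir : IsDirect (affSemigroup g₁) (affSemigroup g₂)) :
    HasSIFR K (Fin.append g₁ g₂) ↔ HasSIFR K g₁ ∧ HasSIFR K g₂ := by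
  refine ⟨fun h => ⟨?_, ?_⟩, fun ⟨h₁, h₂⟩ => h₁.join h₂ hdir⟩
  · have hg₂ (i : Fin m₂) : g₂ i ≠ 0 := Fin.append_right g₁ g₂ i ▸ h.generator_ne_zero _
    exact append_comp_castAdd (g₁ := g₁) (g₂ := g₂) ▸
      h.comp_of_isFace (Fin.castAdd_injective m₁ m₂) (hdir.isFace_castAdd hg₂)
  · have hg₁ (i : Fin m₁) : g₁ i ≠ 0 := Fin.append_left g₁ g₂ i ▸ h.generator_ne_zero _
    exact append_comp_natAdd (g₁ := g₁) (g₂ := g₂) ▸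
      h.comp_of_isFace (Fin.natAdd_injective m₂ m₁) (hdir.isFace_natAdd hg₁)

theorem join_has_SIFR_iff
    {K : Type*} [Field K] {r r₁ n₁ r₂ n₂ : ℕ}
    (g₁ : Fin (r₁ + n₁) → Fin r → ℕ) (g₂ : Fin (r₂ + n₂) → Fin r → ℕ)
    -- `Γ₁`, `Γ₂` are minimally generated by `𝒢₁`, `𝒢₂`:
    (hmin₁ : ∀ i, g₁ i ∉ AddSubmonoid.closure (Set.range g₁ \ {g₁ i}))
    (hmin₂ : ∀ i, g₂ i ∉ AddSubmonoid.closure (Set.range g₂ \ {g₂ i}))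
    -- the generating sets are disjoint:
    (hdisj : Disjoint (Set.range g₁) (Set.range g₂))
    -- the first `r₁` (resp. `r₂`) generators are the extremal rays: every element of
    -- `Γ₁` (resp. `Γ₂`) is a non-negative rational combination of them:
    (hray₁ : ∀ v ∈ affSemigroup g₁, ∃ c : Fin r₁ → ℚ, (∀ t, 0 ≤ c t) ∧
      ∀ j, (v j : ℚ) = ∑ t, c t * (g₁ (Fin.castAdd n₁ t) j : ℚ))
    (hray₂ : ∀ v ∈ affSemigroup g₂, ∃ c : Fin r₂ → ℚ, (∀ t, 0 ≤ c t) ∧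
      ∀ j, (v j : ℚ) = ∑ t, c t * (g₂ (Fin.castAdd n₂ t) j : ℚ))
    -- `E_{Γ₁} ∪ E_{Γ₂}` is linearly independent over `ℚ`:
    (hindep : LinearIndependent ℚ
      (Sum.elim (fun t : Fin r₁ => fun j => (g₁ (Fin.castAdd n₁ t) j : ℚ))
        (fun t : Fin r₂ => fun j => (g₂ (Fin.castAdd n₂ t) j : ℚ)))) :
    -- then the join `Γ = Γ₁ ⊔ Γ₂` has a SIFR iff both `Γ₁` and `Γ₂` have SIFRs:
    HasSIFR K (Fin.append g₁ g₂) ↔ HasSIFR K g₁ ∧ HasSIFR K g₂ :=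
  join_has_SIFR_iff_general <| isDirect_of_linearIndependent hindep
    (fun v hv => (hray₁ v hv).imp fun _ hc => hc.2) fun v hv => (hray₂ v hv).imp fun _ hc => hc.2
end
end

section
/- Let Γ₁, Γ₂ ⊆ ℕ^r be affine semigroups whose join Γ = Γ₁ ⊔ Γ₂ is defined. Fix j ∈ {1,2} and let b, b′ ∈ Γⱼ. Then b − b′ ∈ Γ if and only if b − b′ ∈ Γⱼ. In particular, for b, b′ ∈ Γ₁, if b − b′ = γ₁ + γ₂ with γ₁ ∈ Γ₁ and γ₂ ∈ Γ₂, then γ₂ = 0. -/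
/-!
Linear independence of the extremal rays makes the rational spans of `Γ₁` and `Γ₂` meet only in
`0`, so `(γ₁, γ₂) ↦ γ₁ + γ₂` is injective on `Γ₁ × Γ₂`: every element of the join decomposes
uniquely. For `b, b', γ₁ ∈ Γ₁` and `γ₂ ∈ Γ₂` with `b = b' + γ₁ + γ₂`, comparing the decompositions
`b + 0 = (b' + γ₁) + γ₂` gives `γ₂ = 0`.
-/

open MvPolynomial

noncomputable section

set_option synthInstance.maxHeartbeats 1000000
set_option maxHeartbeats 1000000

lemma range_fin_append {α : Type*} {m n : ℕ} (a : Fin m → α) (b : Fin n → α) :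
    Set.range (Fin.append a b) = Set.range a ∪ Set.range b := by
  rw [← Set.Sum.elim_range, ← Fin.append_comp_sumElim]
  exact (finSumFinEquiv.surjective.range_comp (Fin.append a b)).symm

lemma affSemigroup_append_s14 {m n d : ℕ} (a : Fin m → Fin d → ℕ) (b : Fin n → Fin d → ℕ) :
    affSemigroup (Fin.append a b) = affSemigroup a ⊔ affSemigroup b := by
  simp only [affSemigroup, range_fin_append, AddSubmonoid.closure_union]

lemma mem_span_range_of_apply_eq_sum {K ι σ : Type*} [Semiring K] [Fintype ι] {u : ι → σ → K}
    {x : σ → K} (h : ∃ c : ι → K, ∀ j, x j = ∑ i, c i * u i j) :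
    x ∈ Submodule.span K (Set.range u) := by
  obtain ⟨c, hc⟩ := h
  refine (Submodule.mem_span_range_iff_exists_fun K).mpr ⟨c, funext fun j => ?_⟩
  simpa only [Finset.sum_apply, Pi.smul_apply, smul_eq_mul] using (hc j).symm

section UniqueDecomposition

variable {M : Type*} [AddCommMonoid M] {S T : AddSubmonoid M}

lemma injective_add_of_disjoint {G : Type*} [AddCommGroup G] {φ : M →+ G}
    (hφ : Function.Injective φ) {U V : AddSubgroup G} (hUV : Disjoint U V)
    (hS : ∀ s ∈ S, φ s ∈ U) (hT : ∀ t ∈ T, φ t ∈ V) :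
    Function.Injective fun p : S × T => (p.1 + p.2 : M) := by
  let f : S → U := fun s => ⟨φ s, hS s s.2⟩
  let g : T → V := fun t => ⟨φ t, hT t t.2⟩
  have f_injective : Function.Injective f :=
    fun _ _ h => Subtype.ext (hφ (congrArg Subtype.val h))
  have g_injective : Function.Injective g :=
    fun _ _ h => Subtype.ext (hφ (congrArg Subtype.val h))
  refine Function.Injective.of_comp (f := φ) ?_
  simpa only [Function.comp_def, Prod.map, map_add]
    using (AddSubgroup.add_injective_of_disjoint hUV).comp (f_injective.prodMap g_injective)

lemma injective_add_of_linearIndependent {K E ι κ : Type*} [Ring K] [AddCommGroup E] [Module K E]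
    {φ : M →+ E} (hφ : Function.Injective φ) {u : ι → E} {v : κ → E}
    (huv : LinearIndependent K (Sum.elim u v))
    (hS : ∀ s ∈ S, φ s ∈ Submodule.span K (Set.range u))
    (hT : ∀ t ∈ T, φ t ∈ Submodule.span K (Set.range v)) :
    Function.Injective fun p : S × T => (p.1 + p.2 : M) := by
  have spans_disjoint :
      Disjoint (Submodule.span K (Set.range u)) (Submodule.span K (Set.range v)) :=
    (linearIndependent_sum.mp huv).2.2
  exact injective_add_of_disjoint hφ (U := (Submodule.span K (Set.range u)).toAddSubgroup)
    (V := (Submodule.span K (Set.range v)).toAddSubgroup)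
    (AddSubgroup.disjoint_def.mpr fun hu hv => Submodule.disjoint_def.mp spans_disjoint _ hu hv)
    hS hT

lemma injective_add_swap (hST : Function.Injective fun p : S × T => (p.1 + p.2 : M)) :
    Function.Injective fun p : T × S => (p.1 + p.2 : M) := by
  simpa only [Function.comp_def, Prod.fst_swap, Prod.snd_swap, add_comm]
    using hST.comp Prod.swap_injective

lemma eq_zero_of_injective_add (hST : Function.Injective fun p : S × T => (p.1 + p.2 : M))
    {s s' t : M} (hs : s ∈ S) (hs' : s' ∈ S) (ht : t ∈ T) (h : s = s' + t) : t = 0 := by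
  have pair_eq : ((⟨s', hs'⟩, ⟨t, ht⟩) : S × T) = (⟨s, hs⟩, 0) :=
    hST (by simpa only [ZeroMemClass.coe_zero, add_zero] using h.symm)
  exact congrArg (fun p : S × T => (p.2 : M)) pair_eq

lemma exists_mem_sup_eq_add_iff (hST : Function.Injective fun p : S × T => (p.1 + p.2 : M))
    {b b' : M} (hb : b ∈ S) (hb' : b' ∈ S) :
    (∃ γ ∈ S ⊔ T, b = b' + γ) ↔ ∃ γ ∈ S, b = b' + γ := by
  constructor
  · rintro ⟨γ, hγ, h⟩
    obtain ⟨s, hs, t, ht, rfl⟩ := AddSubmonoid.mem_sup.mp hγ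
    have ht0 : t = 0 :=
      eq_zero_of_injective_add hST hb (S.add_mem hb' hs) ht (h.trans (add_assoc b' s t).symm)
    exact ⟨s, hs, by rw [h, ht0, add_zero]⟩
  · rintro ⟨γ, hγ, h⟩
    exact ⟨γ, AddSubmonoid.mem_sup_left hγ, h⟩

theorem difference_in_join_iff_general
    (hST : Function.Injective fun p : S × T => (p.1 + p.2 : M)) :
    (∀ b ∈ S, ∀ b' ∈ S, ((∃ γ ∈ S ⊔ T, b = b' + γ) ↔ ∃ γ ∈ S, b = b' + γ)) ∧
    (∀ b ∈ T, ∀ b' ∈ T, ((∃ γ ∈ S ⊔ T, b = b' + γ) ↔ ∃ γ ∈ T, b = b' + γ)) ∧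
    (∀ b ∈ S, ∀ b' ∈ S, ∀ γ₁ ∈ S, ∀ γ₂ ∈ T, b = b' + γ₁ + γ₂ → γ₂ = 0) := by
  refine ⟨fun b hb b' hb' => exists_mem_sup_eq_add_iff hST hb hb', fun b hb b' hb' => ?_,
    fun b hb b' hb' γ₁ hγ₁ γ₂ hγ₂ h => eq_zero_of_injective_add hST hb (S.add_mem hb' hγ₁) hγ₂ h⟩
  rw [sup_comm]
  exact exists_mem_sup_eq_add_iff (injective_add_swap hST) hb hb'

end UniqueDecomposition

theorem difference_in_join_iff
    {r r₁ n₁ r₂ n₂ : ℕ}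
    (g₁ : Fin (r₁ + n₁) → Fin r → ℕ) (g₂ : Fin (r₂ + n₂) → Fin r → ℕ)
    -- `Γ₁`, `Γ₂` are minimally generated by `𝒢₁`, `𝒢₂`:
    (hmin₁ : ∀ i, g₁ i ∉ AddSubmonoid.closure (Set.range g₁ \ {g₁ i}))
    (hmin₂ : ∀ i, g₂ i ∉ AddSubmonoid.closure (Set.range g₂ \ {g₂ i}))
    -- the generating sets are disjoint:
    (hdisj : Disjoint (Set.range g₁) (Set.range g₂))
    -- the first `r₁` (resp. `r₂`) generators are the extremal rays: every element of
    -- `Γ₁` (resp. `Γ₂`) is a non-negative rational combination of them: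
    (hray₁ : ∀ v ∈ affSemigroup g₁, ∃ c : Fin r₁ → ℚ, (∀ t, 0 ≤ c t) ∧
      ∀ j, (v j : ℚ) = ∑ t, c t * (g₁ (Fin.castAdd n₁ t) j : ℚ))
    (hray₂ : ∀ v ∈ affSemigroup g₂, ∃ c : Fin r₂ → ℚ, (∀ t, 0 ≤ c t) ∧
      ∀ j, (v j : ℚ) = ∑ t, c t * (g₂ (Fin.castAdd n₂ t) j : ℚ))
    -- `E_{Γ₁} ∪ E_{Γ₂}` is linearly independent over `ℚ`:
    (hindep : LinearIndependent ℚ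
      (Sum.elim (fun t : Fin r₁ => fun j => (g₁ (Fin.castAdd n₁ t) j : ℚ))
        (fun t : Fin r₂ => fun j => (g₂ (Fin.castAdd n₂ t) j : ℚ)))) :
    -- for `b, b′ ∈ Γⱼ` (`j = 1, 2`): `b − b′ ∈ Γ = Γ₁ ⊔ Γ₂` iff `b − b′ ∈ Γⱼ`;
    -- in particular for `b, b′ ∈ Γ₁`, if `b − b′ = γ₁ + γ₂` with `γᵢ ∈ Γᵢ` then `γ₂ = 0`:
    (∀ b ∈ affSemigroup g₁, ∀ b' ∈ affSemigroup g₁,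
      ((∃ γ ∈ affSemigroup (Fin.append g₁ g₂), b = b' + γ) ↔
        (∃ γ ∈ affSemigroup g₁, b = b' + γ))) ∧
    (∀ b ∈ affSemigroup g₂, ∀ b' ∈ affSemigroup g₂,
      ((∃ γ ∈ affSemigroup (Fin.append g₁ g₂), b = b' + γ) ↔
        (∃ γ ∈ affSemigroup g₂, b = b' + γ))) ∧
    (∀ b ∈ affSemigroup g₁, ∀ b' ∈ affSemigroup g₁,
      ∀ γ₁ ∈ affSemigroup g₁, ∀ γ₂ ∈ affSemigroup g₂,
        b = b' + γ₁ + γ₂ → γ₂ = 0) := by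
  rw [affSemigroup_append_s14]
  exact difference_in_join_iff_general <| injective_add_of_linearIndependent
    (φ := (Nat.castAddMonoidHom ℚ).compLeft (Fin r)) Nat.cast_injective.comp_left hindep
    (fun v hv => mem_span_range_of_apply_eq_sum <| (hray₁ v hv).imp fun _ hc => hc.2)
    (fun v hv => mem_span_range_of_apply_eq_sum <| (hray₂ v hv).imp fun _ hc => hc.2)
end
end
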